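/- Assuming the Riemann Hypothesis, for every complex number s with Re(s) > 1/2 such that s - 1 does not lie on the nonpositive real axis (i.e., s is not a real number in (1/2, 1]), one has ζ(2s)/ζ(s) = lim_{x → ∞} exp(−E₁((s-1)·log x)) · ∏_{p ≤ x, p prime} (1 + p^{-s})^{-1}, where the product runs over all primes p ≤ x. -/

import Mathlib

open Filter

/-- The exponential integral `E₁(z) = -γ - log z - ∑_{k=1}^∞ (-z)^k / (k·k!)`. -/
noncomputable def expIntegralE1 (z : ℂ) : ℂ :=
  -(Real.eulerMascheroniConstant : ℂ) - Complex.log z -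
    ∑' k : ℕ, (-z) ^ (k + 1) / (((k + 1) * Nat.factorial (k + 1) : ℕ) : ℂ)

open MeasureTheory Set in
lemma L0 {g : ℝ → ℂ} {a β C : ℝ} (ha : 0 < a) (hg : Measurable g)
    (hb : ∀ t > a, ‖g t‖ ≤ C * t ^ β) {s : ℂ} (hs : β < s.re) :
    IntegrableOn (fun t : ℝ => g t * (t : ℂ) ^ (-s - 1)) (Ioi a) ∧
    DifferentiableAt ℂ (fun s : ℂ => ∫ t in Ioi a, g t * (t : ℂ) ^ (-s - 1)) s := by
  set f : ℝ → ℂ := (Ioi a).indicator g with hf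
  have hfm : Measurable f := hg.indicator measurableSet_Ioi
  have hC : 0 ≤ C := by
    have := (norm_nonneg _).trans (hb (a+1) (by linarith))
    exact nonneg_of_mul_nonneg_left this (by positivity)
  have hloc : LocallyIntegrableOn f (Ioi 0) := by
    rw [locallyIntegrableOn_iff (isOpen_Ioi.isLocallyClosed)]
    intro k hk hkc
    have hcont : ContinuousOn (fun t : ℝ => C * t ^ β) k := by
      intro t ht
      exact (continuousAt_const.mul (Real.continuousAt_rpow_const _ _
        (Or.inl (ne_of_gt (hk ht))))).continuousWithinAt
    refine Integrable.mono' (hcont.integrableOn_compact hkc) hfm.aestronglyMeasurable ?_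
    refine (ae_restrict_iff' hkc.measurableSet).2 (ae_of_all _ fun t ht => ?_)
    have : 0 < t := hk ht
    by_cases h : t ∈ Ioi a
    · simpa [hf, h] using hb t h
    · simp only [hf, Set.indicator_of_notMem h, norm_zero]; positivity
  have htop : f =O[atTop] fun x : ℝ => x ^ (-(-β)) := by
    refine Asymptotics.IsBigO.of_bound C ?_
    filter_upwards [eventually_gt_atTop a] with t ht
    have h0 : 0 < t := ha.trans ht
    rw [neg_neg, Real.norm_of_nonneg (by positivity)]
    simpa [hf, Set.indicator_of_mem (show t ∈ Ioi a from ht)] using hb t ht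
  have hbot : f =O[nhdsWithin 0 (Ioi 0)] fun x : ℝ => x ^ (-((-s).re - 1)) := by
    refine Asymptotics.IsBigO.of_bound 0 ?_
    have : Iio a ∈ nhdsWithin (0:ℝ) (Ioi 0) := mem_nhdsWithin_of_mem_nhds (Iio_mem_nhds ha)
    filter_upwards [this] with t ht
    have : t ∉ Ioi a := by simp only [mem_Ioi, not_lt]; exact le_of_lt ht
    simp [hf, Set.indicator_of_notMem this]
  have hre : (-s).re < -β := by simpa using hs
  have key : ∀ s : ℂ, (fun t : ℝ => (t : ℂ) ^ (-s - 1) • f t) =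
      (Ioi a).indicator (fun t : ℝ => g t * (t : ℂ) ^ (-s - 1)) := by
    intro s
    ext t
    by_cases h : t ∈ Ioi a
    · simp [hf, h, mul_comm]
    · simp [hf, Set.indicator_of_notMem h]
  have hsub : Ioi a ∩ Ioi 0 = Ioi a := by
    ext t; simp only [mem_inter_iff, mem_Ioi, and_iff_left_iff_imp]; intro h; linarith
  constructor
  · have h1 := mellinConvergent_of_isBigO_rpow hloc htop hre hbot (by linarith)
    unfold MellinConvergent at h1
    rw [key, ← integrable_indicator_iff measurableSet_Ioi, indicator_indicator, inter_comm, hsub,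
      integrable_indicator_iff measurableSet_Ioi] at h1
    exact h1
  · have h2 := mellin_differentiableAt_of_isBigO_rpow hloc htop hre hbot (by linarith)
    have h3 : (fun s : ℂ => ∫ t in Ioi a, g t * (t : ℂ) ^ (-s - 1)) = fun s => mellin f (-s) := by
      ext s
      unfold mellin
      rw [key, setIntegral_indicator measurableSet_Ioi, inter_comm, hsub]
    rw [h3]
    exact DifferentiableAt.comp (g := mellin f) (f := fun s : ℂ => -s) s h2 differentiableAt_id.neg

/-- `(s - 1) ζ(s)`, with the removable singularity filled in. -/
noncomputable def zZ (s : ℂ) : ℂ := Function.update (fun s => (s - 1) * riemannZeta s) 1 1 s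

lemma zZ_one : zZ 1 = 1 := by simp [zZ]
lemma zZ_of_ne {s : ℂ} (hs : s ≠ 1) : zZ s = (s - 1) * riemannZeta s := by simp [zZ, hs]

lemma zZ_eventuallyEq {s : ℂ} (hs : s ≠ 1) :
    zZ =ᶠ[nhds s] fun s => (s - 1) * riemannZeta s := by
  filter_upwards [isOpen_ne.mem_nhds hs] with z hz using zZ_of_ne hz

lemma zZ_diff : Differentiable ℂ zZ := by
  have hne : ∀ s : ℂ, s ≠ 1 → DifferentiableAt ℂ zZ s := by
    intro s hs
    refine DifferentiableAt.congr_of_eventuallyEq ?_ (zZ_eventuallyEq hs)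
    exact (differentiableAt_id.sub_const 1).mul (differentiableAt_riemannZeta hs)
  intro s
  by_cases hs : s = 1
  · subst hs
    refine (Complex.analyticAt_of_differentiable_on_punctured_nhds_of_continuousAt ?_ ?_).differentiableAt
    · filter_upwards [self_mem_nhdsWithin] with z hz using hne z hz
    · exact continuousAt_update_same.2 riemannZeta_residue_one
  · exact hne s hs

lemma zZ_ne_zero (RH : RiemannHypothesis) {s : ℂ} (hs : 1 / 2 < s.re) : zZ s ≠ 0 := by
  by_cases h1 : s = 1
  · rw [h1, zZ_one]; exact one_ne_zero
  · rw [zZ_of_ne h1]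
    refine mul_ne_zero (sub_ne_zero.2 h1) fun h => ?_
    have := RH s h ?_ h1
    · linarith
    · rintro ⟨n, rfl⟩
      simp at hs
      have : (0:ℝ) ≤ n := Nat.cast_nonneg n
      linarith

open MeasureTheory Set in
lemma zZ_formula {s : ℂ} (hs : 0 < s.re) :
    zZ s = s - s * (s - 1) * ∫ t in Ioi (1:ℝ), ((Int.fract t : ℝ) : ℂ) * (t : ℂ) ^ (-s - 1) := by
  have hfr : Measurable fun t : ℝ => ((Int.fract t : ℝ) : ℂ) :=
    Complex.measurable_ofReal.comp measurable_fract
  have hfb : ∀ t > (1:ℝ), ‖((Int.fract t : ℝ) : ℂ)‖ ≤ 1 * t ^ (0:ℝ) := by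
    intro t _
    rw [Complex.norm_real, Real.norm_of_nonneg (Int.fract_nonneg t), Real.rpow_zero]
    linarith [Int.fract_lt_one t]
  set U : Set ℂ := {s | 0 < s.re} with hU
  have hUo : IsOpen U := isOpen_lt continuous_const Complex.continuous_re
  have hUc : IsPreconnected U := (convex_halfSpace_re_gt 0).isPreconnected
  set G : ℂ → ℂ := fun s => s - s * (s - 1) *
    ∫ t in Ioi (1:ℝ), ((Int.fract t : ℝ) : ℂ) * (t : ℂ) ^ (-s - 1) with hG
  have hGd : DifferentiableOn ℂ G U := by
    intro z hz
    have := (L0 one_pos hfr hfb (s := z) hz).2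
    exact (differentiableAt_id.sub ((differentiableAt_id.mul
      (differentiableAt_id.sub_const 1)).mul this)).differentiableWithinAt
  have h2 : (2:ℂ) ∈ U := by simp [hU]
  refine (zZ_diff.differentiableOn.analyticOnNhd hUo).eqOn_of_preconnected_of_eventuallyEq
    (hGd.analyticOnNhd hUo) hUc h2 ?_ hs
  have hnh : {s : ℂ | 1 < s.re} ∈ nhds (2:ℂ) :=
    (isOpen_lt continuous_const Complex.continuous_re).mem_nhds (by simp)
  filter_upwards [hnh] with z hz
  have hz : 1 < z.re := hz
  have hz1 : z ≠ 1 := by rintro rfl; simp at hz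
  have hzs : z - 1 ≠ 0 := sub_ne_zero.2 hz1
  have e1 := LSeries_eq_mul_integral_of_nonneg (fun _ => 1) (r := 1) zero_le_one hz
    (by
      refine Asymptotics.IsBigO.of_bound 1 ?_
      filter_upwards with n
      simp) (fun _ => zero_le_one)
  have e2 : LSeries (fun n => (((1:ℝ)) : ℂ)) z = riemannZeta z := by
    rw [← LSeries_one_eq_riemannZeta hz]; congr 1
  rw [e2] at e1
  have e3 : ∫ (t : ℝ) in Ioi 1, (∑ k ∈ Finset.Icc 1 ⌊t⌋₊, (((1:ℝ)):ℂ)) * (t:ℂ) ^ (-(z + 1))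
      = (∫ (t : ℝ) in Ioi 1, (t : ℂ) ^ (-z)) -
        ∫ t in Ioi (1:ℝ), ((Int.fract t : ℝ) : ℂ) * (t : ℂ) ^ (-z - 1) := by
    rw [← integral_sub]
    · refine setIntegral_congr_fun measurableSet_Ioi fun t ht => ?_
      have ht0 : (0:ℝ) < t := zero_lt_one.trans ht
      have htc : (t : ℂ) ≠ 0 := by exact_mod_cast ht0.ne'
      have h4 : (t:ℂ) ^ (-z) = t * (t:ℂ) ^ (-z - 1) := by
        rw [Complex.cpow_sub _ _ htc, Complex.cpow_one]; field_simp
      have h5 : ((⌊t⌋₊ : ℕ) : ℝ) = t - Int.fract t := by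
        rw [← Int.self_sub_floor]
        rw [natCast_floor_eq_intCast_floor ht0.le]; ring
      have h5' : ((⌊t⌋₊ : ℕ) : ℂ) = t - ((Int.fract t : ℝ) : ℂ) := by
        rw [← Complex.ofReal_sub, ← h5]; simp
      simp only [Complex.ofReal_one, Finset.sum_const, Nat.card_Icc, add_tsub_cancel_right, nsmul_eq_mul, mul_one]
      rw [h4, h5', neg_add']; ring
    · exact integrableOn_Ioi_cpow_of_lt (by simpa using hz) one_pos
    · exact (L0 one_pos hfr hfb (by linarith)).1
  rw [e3, integral_Ioi_cpow_of_lt (by simpa using hz) one_pos] at e1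
  rw [zZ_of_ne hz1, e1, hG]
  have h7 : -z + 1 ≠ 0 := by
    intro h; apply hzs; linear_combination -h
  have h8 : -((1:ℝ):ℂ) ^ (-z + 1) / (-z + 1) = 1 / (z - 1) := by
    rw [Complex.ofReal_one, Complex.one_cpow]; field_simp; ring
  rw [h8]
  field_simp

open MeasureTheory Set in
lemma zZ_bound {s : ℂ} (hs : 1 / 2 ≤ s.re) : ‖zZ s‖ ≤ 2 * (1 + ‖s‖) ^ 2 := by
  rw [zZ_formula (by linarith)]
  have h1 : ‖∫ t in Ioi (1:ℝ), ((Int.fract t : ℝ) : ℂ) * (t : ℂ) ^ (-s - 1)‖ ≤ 2 := by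
    have hi : IntegrableOn (fun t : ℝ => t ^ (-(1/2:ℝ) - 1)) (Ioi 1) :=
      integrableOn_Ioi_rpow_of_lt (by norm_num) one_pos
    refine (norm_integral_le_of_norm_le (g := fun t : ℝ => t ^ (-(1/2:ℝ) - 1)) hi ?_).trans ?_
    · refine (ae_restrict_iff' measurableSet_Ioi).2 (ae_of_all _ fun t ht => ?_)
      have ht1 : (1:ℝ) < t := ht
      rw [norm_mul, Complex.norm_real, Real.norm_of_nonneg (Int.fract_nonneg t),
        Complex.norm_cpow_eq_rpow_re_of_pos (by linarith)]
      have h2 : t ^ (-s - 1).re ≤ t ^ (-(1/2:ℝ) - 1) := by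
        apply Real.rpow_le_rpow_of_exponent_le ht1.le
        simp; linarith
      have h3 : 0 ≤ t ^ (-s - 1).re := by positivity
      nlinarith [Int.fract_lt_one t, Int.fract_nonneg t]
    · rw [integral_Ioi_rpow_of_lt (by norm_num) one_pos]; norm_num
  have h2 : ‖s - 1‖ ≤ ‖s‖ + 1 := by simpa using norm_sub_le s 1
  calc _ ≤ ‖s‖ + ‖s‖ * ‖s - 1‖ * 2 := by
        refine (norm_sub_le _ _).trans ?_
        rw [norm_mul, norm_mul]; gcongr
    _ ≤ ‖s‖ + ‖s‖ * (‖s‖ + 1) * 2 := by gcongr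
    _ ≤ _ := by nlinarith [norm_nonneg s]

lemma zeta_lower : ∃ c > 0, ∀ s : ℂ, s.re = 2 → c ≤ ‖zZ s‖ := by
  set S : ℝ := ∑' n : ℕ, ‖LSeries.term 1 2 n‖ with hS
  have hsum : Summable fun n => ‖LSeries.term 1 2 n‖ :=
    (LSeriesSummable_one_iff.2 (by norm_num : 1 < (2:ℂ).re)).norm
  have hS0 : 0 ≤ S := tsum_nonneg fun _ => norm_nonneg _
  refine ⟨1 / (S + 1), by positivity, fun s hs => ?_⟩
  have h1 : 1 < s.re := by rw [hs]; norm_num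
  have hmu := ArithmeticFunction.LSeries_zeta_mul_Lseries_moebius h1
  rw [ArithmeticFunction.LSeries_zeta_eq_riemannZeta h1] at hmu
  have hle : ∀ n, ‖LSeries.term (fun n => ((ArithmeticFunction.moebius n : ℤ) : ℂ)) s n‖ ≤
      ‖LSeries.term 1 2 n‖ := by
    intro n
    rw [LSeries.norm_term_eq, LSeries.norm_term_eq, hs]
    split_ifs with h0
    · rfl
    · have : ‖((ArithmeticFunction.moebius n : ℤ) : ℂ)‖ ≤ 1 := by
        rw [Complex.norm_intCast]
        exact_mod_cast ArithmeticFunction.abs_moebius_le_one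
      simp only [Pi.one_apply, norm_one, Complex.re_ofNat]
      gcongr
  have hmub : ‖LSeries (fun n => ((ArithmeticFunction.moebius n : ℤ) : ℂ)) s‖ ≤ S :=
    tsum_of_norm_bounded hsum.hasSum hle
  have hne : s ≠ 1 := by rintro rfl; norm_num at hs
  have hn := congrArg norm hmu
  rw [norm_mul, norm_one] at hn
  rw [zZ_of_ne hne, norm_mul]
  have h3 : 1 ≤ ‖s - 1‖ := by
    have := Complex.re_le_norm (s - 1)
    simp [hs] at this; linarith
  rw [div_le_iff₀ (by positivity)]
  have h4 : 0 ≤ ‖riemannZeta s‖ := norm_nonneg _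
  nlinarith [mul_le_mul_of_nonneg_left hmub h4, mul_nonneg h4 hS0, mul_nonneg (sub_nonneg.2 h3) (mul_nonneg h4 hS0), mul_nonneg (sub_nonneg.2 h3) h4]

lemma logderiv_bound (RH : RiemannHypothesis) {σ₀ : ℝ} (h0 : 1 / 2 < σ₀) :
    ∃ C > 0, ∀ s : ℂ, σ₀ ≤ s.re → s.re ≤ 2 →
      ‖deriv zZ s / zZ s‖ ≤ C * (1 + Real.log (1 + |s.im|)) := by
  obtain ⟨c₀, hc₀, hlow⟩ := zeta_lower
  set d : ℝ := σ₀ - 1 / 2 with hd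
  have hd0 : 0 < d := by linarith
  set K : ℝ := |Real.log (50 / c₀)| + 2 with hK
  have hK0 : 0 < K := by positivity
  refine ⟨27 * K / d ^ 2, by positivity, fun s hs1 hs2 => ?_⟩
  set c : ℂ := ⟨2, s.im⟩ with hc
  set R : ℝ := 3 / 2 - d / 3 with hR
  have hd2 : d ≤ 3 / 2 := by linarith
  have hR0 : 0 < R := by linarith
  have hre : ∀ z ∈ Metric.ball c R, 1 / 2 < z.re := by
    intro z hz
    rw [mem_ball_iff_norm] at hz
    have := Complex.abs_re_le_norm (z - c)
    rw [Complex.sub_re, abs_le] at this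
    have h2 : c.re = 2 := rfl
    linarith [this.1]
  have hdiff : DifferentiableOn ℂ (fun z => deriv zZ z / zZ z) (Metric.ball c R) := by
    intro z hz
    refine (DifferentiableAt.div ?_ (zZ_diff z) (zZ_ne_zero RH (hre z hz))).differentiableWithinAt
    exact (zZ_diff.contDiff (n := 2)).differentiable_deriv_two z
  obtain ⟨g, hgc, hg⟩ := hdiff.isExactOn_ball.with_val_at c 0
  have hcb : c ∈ Metric.ball c R := Metric.mem_ball_self hR0
  have hconst : ∀ z ∈ Metric.ball c R, zZ z * Complex.exp (-g z) = zZ c := by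
    intro z hz
    have hD : ∀ w ∈ Metric.ball c R,
        HasDerivAt (fun w => zZ w * Complex.exp (-g w)) 0 w := by
      intro w hw
      have h1 := (zZ_diff w).hasDerivAt.mul ((hg w hw).neg.cexp)
      have hne := zZ_ne_zero RH (hre w hw)
      have e : zZ w * (deriv zZ w / zZ w) = deriv zZ w := mul_div_cancel₀ _ hne
      refine HasDerivAt.congr_deriv h1 ?_
      linear_combination (-Complex.exp (-g w)) * e
    have := Metric.isOpen_ball.is_const_of_deriv_eq_zero (convex_ball c R).isPreconnected
      (fun w hw => (hD w hw).differentiableAt.differentiableWithinAt)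
      (fun w hw => (hD w hw).deriv) hz hcb
    simpa [hgc] using this
  set L : ℝ := 1 + Real.log (1 + |s.im|) with hL
  have hlog : 0 ≤ Real.log (1 + |s.im|) := Real.log_nonneg (by linarith [abs_nonneg s.im])
  have hM : 0 < K * L := by positivity
  have hgre : ∀ z ∈ Metric.ball c R, (g z).re ≤ K * L := by
    intro z hz
    have h1 := congrArg norm (hconst z hz)
    rw [norm_mul, Complex.norm_exp, Complex.neg_re] at h1
    have h2 : c₀ ≤ ‖zZ c‖ := hlow c rfl
    have h3 := zZ_bound (hre z hz).le
    have h4 : ‖z‖ ≤ |s.im| + 7 / 2 := by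
      have h5 : ‖z‖ ≤ ‖z - c‖ + ‖c‖ := norm_le_norm_sub_add z c
      have h6 : ‖c‖ ≤ 2 + |s.im| := by
        have := Complex.norm_le_abs_re_add_abs_im c
        simpa [hc] using this
      rw [mem_ball_iff_norm] at hz
      linarith
    have h7 : ‖zZ z‖ ≤ 50 * (1 + |s.im|) ^ 2 := by
      refine h3.trans ?_
      have : (1 + ‖z‖) ≤ 5 * (1 + |s.im|) := by linarith [abs_nonneg s.im]
      calc 2 * (1 + ‖z‖) ^ 2 ≤ 2 * (5 * (1 + |s.im|)) ^ 2 := by gcongr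
        _ = _ := by ring
    have h8 : Real.exp ((g z).re) ≤ 50 / c₀ * (1 + |s.im|) ^ 2 := by
      have e1 : Real.exp ((g z).re) * ‖zZ c‖ = ‖zZ z‖ := by
        rw [← h1, Real.exp_neg]; field_simp
      rw [div_mul_eq_mul_div, le_div_iff₀ hc₀]
      calc _ ≤ Real.exp ((g z).re) * ‖zZ c‖ := by gcongr
        _ ≤ _ := by rw [e1]; exact h7
    have hpos : 0 < 1 + |s.im| := by positivity
    have h9 := Real.log_le_log (Real.exp_pos _) h8
    rw [Real.log_exp, Real.log_mul (by positivity) (by positivity), Real.log_pow] at h9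
    have h10 := le_abs_self (Real.log (50 / c₀))
    push_cast at h9
    rw [hK, hL]
    nlinarith [abs_nonneg (Real.log (50 / c₀))]
  have hgb : ∀ z, ‖z - c‖ ≤ 3 / 2 - 2 * d / 3 → ‖g z‖ ≤ 9 * (K * L) / d := by
    intro z hz
    have hzR : ‖z - c‖ < R := by linarith
    have hmap : ∀ w ∈ Metric.ball (0:ℂ) R, c + w ∈ Metric.ball c R := by
      intro w hw; simpa [mem_ball_iff_norm] using hw
    have := Complex.borelCaratheodory_zero (f := fun w => g (c + w)) (M := K * L) (R := R)
      (z := z - c) hM ?_ ?_ hR0 ?_ (by simpa using hgc)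
    · simp only [add_sub_cancel] at this
      refine this.trans ?_
      rw [div_le_div_iff₀ (by linarith) hd0]
      have h11 : d / 3 ≤ R - ‖z - c‖ := by linarith
      have h12 : ‖z - c‖ ≤ 3 / 2 := by linarith
      calc 2 * (K * L) * ‖z - c‖ * d ≤ 2 * (K * L) * (3 / 2) * d := by gcongr
        _ = 9 * (K * L) * (d / 3) := by ring
        _ ≤ _ := by gcongr
    · intro w hw
      have := hg _ (hmap w hw)
      have h2 : HasDerivAt (fun w => g (c + w)) _ w := this.comp_const_add c w
      exact h2.differentiableAt.differentiableWithinAt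
    · intro w hw
      exact hgre _ (hmap w hw)
    · simpa using hzR
  have hsc : ‖s - c‖ ≤ 3 / 2 - d := by
    have h1 : s - c = ((s.re - 2 : ℝ) : ℂ) := by
      apply Complex.ext <;> simp [hc]
    rw [h1, Complex.norm_real, Real.norm_eq_abs, abs_le]
    constructor <;> linarith
  have hsub : ∀ z, ‖z - s‖ ≤ d / 3 → ‖z - c‖ ≤ 3 / 2 - 2 * d / 3 := by
    intro z hz
    have : ‖z - c‖ ≤ ‖z - s‖ + ‖s - c‖ := norm_sub_le_norm_sub_add_norm_sub z s c
    linarith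
  have hd3 : 0 < d / 3 := by positivity
  have hfin := Complex.norm_deriv_le_of_forall_mem_sphere_norm_le (f := g) (c := s) (R := d / 3)
    (C := 9 * (K * L) / d) hd3 ?_ ?_
  · have hsb : s ∈ Metric.ball c R := by rw [mem_ball_iff_norm]; linarith
    rw [(hg s hsb).deriv] at hfin
    refine hfin.trans (le_of_eq ?_)
    field_simp
    ring
  · apply DifferentiableOn.diffContOnCl
    rw [closure_ball _ hd3.ne']
    intro z hz
    rw [mem_closedBall_iff_norm] at hz
    have h1 := hsub z hz
    refine (hg z ?_).differentiableAt.differentiableWithinAt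
    rw [mem_ball_iff_norm]; linarith
  · intro z hz
    rw [mem_sphere_iff_norm] at hz
    exact hgb z (hsub z hz.le)

lemma inv_norm_bound {s : ℂ} {c : ℝ} (hc : 0 < c) (hs : c ≤ s.re) :
    ‖s‖⁻¹ ≤ (1 + 1 / c) * (1 + |s.im|)⁻¹ := by
  have h1 : c ≤ ‖s‖ := hs.trans (Complex.re_le_norm s)
  have h2 : |s.im| ≤ ‖s‖ := Complex.abs_im_le_norm s
  have h0 : 0 < ‖s‖ := hc.trans_le h1
  have h3 : 0 < 1 + |s.im| := by positivity
  rw [← one_div, ← div_eq_mul_inv, div_le_div_iff₀ h0 h3]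
  have : 1 ≤ 1 / c * ‖s‖ := by rw [one_div_mul_eq_div, le_div_iff₀ hc]; linarith
  linarith

lemma integrable_decay {f : ℝ → ℂ} {C r : ℝ} (hf : MeasureTheory.AEStronglyMeasurable f)
    (hr : 1 < r) (hb : ∀ t, ‖f t‖ ≤ C * (1 + |t|) ^ (-r)) : MeasureTheory.Integrable f := by
  have h := (integrable_one_add_norm (E := ℝ) (μ := MeasureTheory.volume) (r := r)
    (by simpa using hr)).const_mul C
  refine h.mono' hf (MeasureTheory.ae_of_all _ fun t => ?_)
  simpa using hb t

lemma contour_shift {f : ℂ → ℂ} {a b C r : ℝ} (hab : a ≤ b) (hr : 1 < r)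
    (hd : DifferentiableOn ℂ f {s | a ≤ s.re ∧ s.re ≤ b})
    (hb : ∀ s : ℂ, a ≤ s.re → s.re ≤ b → ‖f s‖ ≤ C * (1 + |s.im|) ^ (-r)) :
    ∫ t : ℝ, f (a + t * Complex.I) = ∫ t : ℝ, f (b + t * Complex.I) := by
  have hline : ∀ c : ℝ, a ≤ c → c ≤ b →
      MeasureTheory.Integrable (fun t : ℝ => f (c + t * Complex.I)) := by
    intro c h1 h2
    refine integrable_decay (C := C) (Continuous.aestronglyMeasurable ?_) hr ?_
    · refine hd.continuousOn.comp_continuous (by fun_prop) fun t => ?_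
      simp [h1, h2]
    · intro t
      simpa using hb (c + t * Complex.I) (by simpa using h1) (by simpa using h2)
  have ha := MeasureTheory.intervalIntegral_tendsto_integral (hline a le_rfl hab)
    tendsto_neg_atTop_atBot tendsto_id
  have hb' := MeasureTheory.intervalIntegral_tendsto_integral (hline b hab le_rfl)
    tendsto_neg_atTop_atBot tendsto_id
  have hC : Tendsto (fun T : ℝ => C * (1 + T) ^ (-r) * |b - a|) atTop (nhds 0) := by
    have h1 : Tendsto (fun T : ℝ => (1 + T) ^ (-r)) atTop (nhds 0) :=
      (tendsto_rpow_neg_atTop (by linarith)).comp (tendsto_atTop_add_const_left _ 1 tendsto_id)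
    simpa using (h1.const_mul C).mul_const |b - a|
  have hhor : ∀ σ : ℝ → ℝ, (∀ T, |σ T| = |T|) →
      Tendsto (fun T : ℝ => ∫ x in a..b, f (x + (σ T : ℝ) * Complex.I)) atTop (nhds 0) := by
    intro σ hσ
    refine squeeze_zero_norm' ?_ hC
    filter_upwards [eventually_ge_atTop 0] with T hT
    refine intervalIntegral.norm_integral_le_of_norm_le_const fun x hx => ?_
    rw [Set.uIoc_of_le hab] at hx
    have := hb (x + (σ T : ℝ) * Complex.I) (by simpa using hx.1.le) (by simpa using hx.2)
    simpa [hσ, abs_of_nonneg hT] using this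
  have h1 := hhor (fun T => -T) (fun T => abs_neg T)
  have h2 := hhor (fun T => T) (fun T => rfl)
  have hlim := ((h1.sub h2).add (hb'.const_smul Complex.I)).sub (ha.const_smul Complex.I)
  have hzero : ∀ T : ℝ, ((∫ x in a..b, f (x + ((-T : ℝ) : ℂ) * Complex.I)) -
      (∫ x in a..b, f (x + (T : ℂ) * Complex.I)) +
      Complex.I • ∫ y in (-T)..(id T), f (b + y * Complex.I)) -
      Complex.I • ∫ y in (-T)..(id T), f (a + y * Complex.I) = 0 := by
    intro T
    have := Complex.integral_boundary_rect_eq_zero_of_differentiableOn f ⟨a, -T⟩ ⟨b, T⟩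
      (hd.mono (by
        intro z hz
        rw [Complex.mem_reProdIm] at hz
        have := hz.1
        simp only [Set.uIcc_of_le hab] at this
        exact this))
    simpa using this
  have h3 := tendsto_nhds_unique (hlim.congr (fun T => hzero T)) tendsto_const_nhds
  simp only [sub_zero, zero_add, smul_eq_mul] at h3
  have h4 := sub_eq_zero.1 h3
  exact (mul_left_cancel₀ Complex.I_ne_zero h4).symm

open MeasureTheory Set in
lemma kernel {c y : ℝ} (hc : 0 < c) (hy : 0 < y) :
    Integrable (fun t : ℝ => 1 / (((c : ℂ) + t * Complex.I) * (c + t * Complex.I + 1))) ∧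
    ∫ t : ℝ, (y : ℂ) ^ ((c : ℂ) + t * Complex.I) *
      (1 / (((c : ℂ) + t * Complex.I) * (c + t * Complex.I + 1))) =
      2 * Real.pi * ((max 0 (1 - 1 / y) : ℝ) : ℂ) := by
  have hIntg : Integrable (fun t : ℝ => 1 / (((c : ℂ) + t * Complex.I) * (c + t * Complex.I + 1))) := by
    have hne : ∀ t : ℝ, ((c : ℂ) + t * Complex.I) * (c + t * Complex.I + 1) ≠ 0 := by
      intro t
      refine mul_ne_zero (fun h => ?_) (fun h => ?_)
      · have := congrArg Complex.re h; simp at this; linarith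
      · have := congrArg Complex.re h; simp at this; linarith
    refine integrable_decay (r := 2) (C := (1 + 1 / c) * (1 + 1 / c)) ?_ (by norm_num) ?_
    · refine Continuous.aestronglyMeasurable ?_
      exact continuous_const.div (by fun_prop) hne
    · intro t
      rw [norm_div, norm_one, norm_mul, one_div, mul_inv]
      have h1 := inv_norm_bound (s := (c : ℂ) + t * Complex.I) hc (by simp)
      have h2 := inv_norm_bound (s := (c : ℂ) + t * Complex.I + 1) hc (by simp)
      simp only [Complex.add_im, Complex.ofReal_im, Complex.mul_im, Complex.ofReal_re, Complex.I_im,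
        mul_one, Complex.I_re, mul_zero, add_zero, zero_add, Complex.one_im] at h1 h2
      have h3 : (1 + |t|) ^ (-2:ℝ) = (1 + |t|)⁻¹ * (1 + |t|)⁻¹ := by
        rw [Real.rpow_neg (by positivity), Real.rpow_two, ← mul_inv, sq]
      rw [h3]
      calc _ ≤ ((1 + 1 / c) * (1 + |t|)⁻¹) * ((1 + 1 / c) * (1 + |t|)⁻¹) := by gcongr
        _ = _ := by ring
  refine ⟨hIntg, ?_⟩
  set f : ℝ → ℂ := fun t => indicator (Ioc 0 1) (fun _ => (1:ℂ)) t -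
    indicator (Ioc 0 1) (fun t : ℝ => (t : ℂ) ^ (1:ℂ)) t with hf
  have hM : ∀ s : ℂ, 0 < s.re → HasMellin f s (1 / s - 1 / (s + 1)) := by
    intro s hs
    have h1 := hasMellin_one_Ioc hs
    have h2 := hasMellin_cpow_Ioc 1 (s := s) (by simp; linarith)
    have h3 := hasMellin_sub h1.1 h2.1
    rwa [h1.2, h2.2] at h3
  have hMe : ∀ t : ℝ, mellin f (c + t * Complex.I) =
      1 / (((c : ℂ) + t * Complex.I) * (c + t * Complex.I + 1)) := by
    intro t
    rw [(hM _ (by simpa using hc)).2]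
    have h1 : (c : ℂ) + t * Complex.I ≠ 0 := by
      intro h; have := congrArg Complex.re h; simp at this; linarith
    have h2 : (c : ℂ) + t * Complex.I + 1 ≠ 0 := by
      intro h; have := congrArg Complex.re h; simp at this; linarith
    field_simp
    ring
  have hfe : ∀ u : ℝ, 0 < u → f u = ((max 0 (1 - u) : ℝ) : ℂ) := by
    intro u hu
    by_cases h : u ≤ 1
    · have : u ∈ Ioc (0:ℝ) 1 := ⟨hu, h⟩
      simp [hf, this, max_eq_right (sub_nonneg.2 h)]
    · have : u ∉ Ioc (0:ℝ) 1 := fun h' => h h'.2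
      push Not at h
      simp [hf, this, max_eq_left (sub_nonpos.2 h.le)]
  have hinv := mellinInv_mellin_eq c f (x := 1 / y) (by positivity) (hM c (by simpa using hc)).1
    (by
      unfold Complex.VerticalIntegrable
      exact hIntg.congr (ae_of_all _ fun t => (hMe t).symm))
    (by
      have h1 : f =ᶠ[nhds (1 / y)] fun u => ((max 0 (1 - u) : ℝ) : ℂ) := by
        filter_upwards [Ioi_mem_nhds (show 0 < 1 / y by positivity)] with u hu using hfe u hu
      refine ContinuousAt.congr ?_ h1.symm
      fun_prop)
  rw [hfe _ (by positivity), mellinInv] at hinv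
  have hpi : (2 * Real.pi : ℂ) ≠ 0 := by
    have := Real.pi_ne_zero
    simp [this]
  rw [← hinv, Complex.real_smul]
  push_cast
  rw [← mul_assoc, mul_one_div_cancel hpi, one_mul]
  refine integral_congr_ae (ae_of_all _ fun t => ?_)
  simp only [smul_eq_mul]
  rw [hMe t]
  congr 1
  have hyc : (y : ℂ) ≠ 0 := by exact_mod_cast hy.ne'
  rw [one_div, Complex.inv_cpow, Complex.cpow_neg, inv_inv]
  rw [Complex.arg_ofReal_of_nonneg hy.le]
  exact Real.pi_pos.ne

noncomputable def hH (s : ℂ) : ℂ := (-(deriv zZ s / zZ s) - 1 / 2) / (s * (s + 1))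

lemma hH_diff (RH : RiemannHypothesis) {s : ℂ} (hs : 1 / 2 < s.re) : DifferentiableAt ℂ hH s := by
  have h1 : s ≠ 0 := by rintro rfl; norm_num at hs
  have h2 : s + 1 ≠ 0 := by
    intro h; have := congrArg Complex.re h; simp at this; linarith
  have h3 : DifferentiableAt ℂ (deriv zZ) s := (zZ_diff.contDiff (n := 2)).differentiable_deriv_two s
  have h4 := h3.div (zZ_diff s) (zZ_ne_zero RH hs)
  exact (h4.neg.sub_const _).div (differentiableAt_id.mul (differentiableAt_id.add_const 1))
    (mul_ne_zero h1 h2)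

lemma hH_bound (RH : RiemannHypothesis) {σ₀ ε : ℝ} (h0 : 1 / 2 < σ₀) (hε : 0 < ε) :
    ∃ C > 0, ∀ s : ℂ, σ₀ ≤ s.re → s.re ≤ 2 → ‖hH s‖ ≤ C * (1 + |s.im|) ^ (ε - 2) := by
  obtain ⟨C, hC, hb⟩ := logderiv_bound RH h0
  refine ⟨(C * (1 + 1 / ε) + 1 / 2) * ((1 + 1 / σ₀) * (1 + 1 / σ₀)), by positivity, fun s h1 h2 => ?_⟩
  have hX : 1 ≤ 1 + |s.im| := by linarith [abs_nonneg s.im]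
  set X := 1 + |s.im| with hXdef
  have hX0 : 0 < X := by linarith
  have hXe : 1 ≤ X ^ ε := Real.one_le_rpow hX hε.le
  have hlog : Real.log X ≤ X ^ ε / ε := Real.log_le_rpow_div hX0.le hε
  have hnum : ‖-(deriv zZ s / zZ s) - 1 / 2‖ ≤ (C * (1 + 1 / ε) + 1 / 2) * X ^ ε := by
    calc _ ≤ ‖deriv zZ s / zZ s‖ + 1 / 2 := by
          refine (norm_sub_le _ _).trans ?_
          rw [norm_neg]; simp
      _ ≤ C * (1 + Real.log X) + 1 / 2 := by gcongr; exact hb s h1 h2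
      _ ≤ C * (X ^ ε + X ^ ε / ε) + 1 / 2 * X ^ ε := by gcongr; linarith
      _ = _ := by ring
  have hs0 : 0 < σ₀ := by linarith
  have i1 := inv_norm_bound hs0 h1
  have i2 := inv_norm_bound (s := s + 1) hs0 (by simp; linarith)
  simp only [Complex.add_im, Complex.one_im, add_zero] at i2
  have h3 : X ^ (ε - 2) = X ^ ε * (X⁻¹ * X⁻¹) := by
    rw [Real.rpow_sub hX0, Real.rpow_two, ← mul_inv, ← sq, div_eq_mul_inv]
  rw [hH, norm_div, norm_mul, div_eq_mul_inv, mul_inv, h3]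
  calc _ ≤ (C * (1 + 1 / ε) + 1 / 2) * X ^ ε *
        (((1 + 1 / σ₀) * X⁻¹) * ((1 + 1 / σ₀) * X⁻¹)) := by gcongr
    _ = _ := by ring

lemma hH_eq {s : ℂ} (hs : 1 < s.re) :
    hH s = LSeries (fun n => (ArithmeticFunction.vonMangoldt n : ℂ)) s * (1 / (s * (s + 1))) -
      1 / 2 * (1 / ((s - 1) * (s - 1 + 1))) := by
  have h1 : s ≠ 1 := by rintro rfl; norm_num at hs
  have h0 : s ≠ 0 := by rintro rfl; norm_num at hs
  have hs1 : s - 1 ≠ 0 := sub_ne_zero.2 h1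
  have h2 : s + 1 ≠ 0 := by
    intro h; have := congrArg Complex.re h; simp at this; linarith
  have hz : riemannZeta s ≠ 0 := riemannZeta_ne_zero_of_one_le_re hs.le
  have hd : deriv zZ s = riemannZeta s + (s - 1) * deriv riemannZeta s := by
    rw [(zZ_eventuallyEq h1).deriv_eq]
    have : HasDerivAt (fun s => (s - 1) * riemannZeta s) _ s :=
      ((hasDerivAt_id s).sub_const 1).mul (differentiableAt_riemannZeta h1).hasDerivAt
    rw [this.deriv]; simp
  rw [ArithmeticFunction.LSeries_vonMangoldt_eq_deriv_riemannZeta_div hs, hH, hd, zZ_of_ne h1]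
  simp only [sub_add_cancel]
  field_simp
  ring

open MeasureTheory in
lemma perron {x : ℝ} (hx : 1 ≤ x) :
    HasSum (fun n : ℕ => 2 * Real.pi * ((ArithmeticFunction.vonMangoldt n * max 0 (1 - n / x) : ℝ) : ℂ))
    ((∫ t : ℝ, (x : ℂ) ^ (((2:ℝ) : ℂ) + t * Complex.I) * hH ((2:ℝ) + t * Complex.I)) +
      2 * Real.pi * (((x - 1) / 2 : ℝ) : ℂ)) := by
  have hx0 : 0 < x := by linarith
  have hxc : (x : ℂ) ≠ 0 := by exact_mod_cast hx0.ne'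
  set Λc : ℕ → ℂ := fun n => (ArithmeticFunction.vonMangoldt n : ℂ) with hΛ
  obtain ⟨hIntg, -⟩ := kernel (c := 2) two_pos hx0
  set k : ℝ → ℂ := fun t => 1 / ((((2:ℝ) : ℂ) + t * Complex.I) * ((2:ℝ) + t * Complex.I + 1)) with hk
  set F : ℕ → ℝ → ℂ := fun n t => LSeries.term Λc ((2:ℝ) + t * Complex.I) n *
    ((x : ℂ) ^ (((2:ℝ) : ℂ) + t * Complex.I) * k t) with hF
  have hFn : ∀ n : ℕ, n ≠ 0 → F n = fun t : ℝ => Λc n *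
      ((((x / n : ℝ)) : ℂ) ^ (((2:ℝ) : ℂ) + t * Complex.I) * k t) := by
    intro n hn
    ext t
    have hn0 : (0:ℝ) ≤ n := Nat.cast_nonneg n
    simp only [hF]
    rw [LSeries.term_of_ne_zero hn]
    have : (((x / n : ℝ)) : ℂ) ^ (((2:ℝ) : ℂ) + t * Complex.I) =
        (x : ℂ) ^ (((2:ℝ) : ℂ) + t * Complex.I) / (n : ℂ) ^ (((2:ℝ) : ℂ) + t * Complex.I) := by
      have hmul := Complex.mul_cpow_ofReal_nonneg (a := x / n) (b := n) (by positivity) hn0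
        (((2:ℝ) : ℂ) + t * Complex.I)
      have hnc : (n:ℂ) ≠ 0 := by exact_mod_cast hn
      rw [← Complex.ofReal_mul, div_mul_cancel₀ x (by exact_mod_cast hn)] at hmul
      rw [hmul, Complex.ofReal_natCast, mul_div_cancel_right₀]
      simp [Complex.cpow_eq_zero_iff, hnc]
    rw [this]; ring
  have hnorm : ∀ n t, ‖F n t‖ = (‖LSeries.term Λc 2 n‖ * x ^ 2) * ‖k t‖ := by
    intro n t
    simp only [hF]
    rw [norm_mul, norm_mul, Complex.norm_cpow_eq_rpow_re_of_pos hx0, LSeries.norm_term_eq,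
      LSeries.norm_term_eq]
    simp
    ring_nf
  have hmeas : ∀ n, AEStronglyMeasurable (F n) := by
    intro n
    by_cases hn : n = 0
    · simp only [hF, hn, LSeries.term_zero, zero_mul]; exact aestronglyMeasurable_const
    · rw [hFn n hn]
      refine AEStronglyMeasurable.const_mul (AEStronglyMeasurable.mul ?_ hIntg.1) _
      refine Continuous.aestronglyMeasurable ?_
      have : (((x / n : ℝ)) : ℂ) ≠ 0 := by
        have : (n:ℝ) ≠ 0 := by exact_mod_cast hn
        exact_mod_cast div_ne_zero hx0.ne' this
      exact Continuous.const_cpow (by fun_prop) (Or.inl this)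
  have hFi : ∀ n, Integrable (F n) := by
    intro n
    refine (hIntg.norm.const_mul (‖LSeries.term Λc 2 n‖ * x ^ 2)).mono' (hmeas n)
      (ae_of_all _ fun t => (hnorm n t).le)
  have hsum : Summable fun n => ∫ t, ‖F n t‖ := by
    simp_rw [hnorm, integral_const_mul]
    have : Summable fun n => ‖LSeries.term Λc 2 n‖ :=
      (ArithmeticFunction.LSeriesSummable_vonMangoldt (s := 2) (by norm_num)).norm
    exact (this.mul_right _).mul_right _
  have hmain := hasSum_integral_of_summable_integral_norm hFi hsum
  have hlhs : (fun n => ∫ t, F n t) = fun n : ℕ => 2 * Real.pi *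
      ((ArithmeticFunction.vonMangoldt n * max 0 (1 - n / x) : ℝ) : ℂ) := by
    ext n
    by_cases hn : n = 0
    · simp [hF, hn]
    · have hn1 : (0:ℝ) < n := by exact_mod_cast Nat.pos_of_ne_zero hn
      rw [hFn n hn, integral_const_mul, (kernel two_pos (div_pos hx0 hn1)).2]
      simp only [hΛ]
      rw [one_div_div]
      push_cast
      ring
  rw [hlhs] at hmain
  -- the pole part
  have hk1 := kernel (c := 1) one_pos hx0
  have hpole : ∫ t : ℝ, (x : ℂ) ^ (((2:ℝ) : ℂ) + t * Complex.I) * (1 / 2 *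
      (1 / ((((2:ℝ) : ℂ) + t * Complex.I - 1) * (((2:ℝ) : ℂ) + t * Complex.I - 1 + 1)))) =
      2 * Real.pi * (((x - 1) / 2 : ℝ) : ℂ) := by
    have e : (fun t : ℝ => (x : ℂ) ^ (((2:ℝ) : ℂ) + t * Complex.I) * (1 / 2 *
      (1 / ((((2:ℝ) : ℂ) + t * Complex.I - 1) * (((2:ℝ) : ℂ) + t * Complex.I - 1 + 1))))) =
      fun t : ℝ => ((x : ℂ) / 2) * ((x : ℂ) ^ (((1:ℝ) : ℂ) + t * Complex.I) *
        (1 / ((((1:ℝ) : ℂ) + t * Complex.I) * (((1:ℝ) : ℂ) + t * Complex.I + 1)))) := by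
      ext t
      have e2 : ((2:ℝ) : ℂ) + t * Complex.I = (((1:ℝ) : ℂ) + t * Complex.I) + 1 := by
        push_cast; ring
      rw [e2, Complex.cpow_add _ _ hxc, Complex.cpow_one, add_sub_cancel_right]
      ring
    rw [e, integral_const_mul, hk1.2]
    have h3 : max 0 (1 - 1 / x) = 1 - 1 / x := by
      apply max_eq_right
      rw [sub_nonneg, div_le_one hx0]; exact hx
    rw [h3]
    push_cast
    field_simp
  have hpi : Integrable (fun t : ℝ => (x : ℂ) ^ (((2:ℝ) : ℂ) + t * Complex.I) * (1 / 2 *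
      (1 / ((((2:ℝ) : ℂ) + t * Complex.I - 1) * (((2:ℝ) : ℂ) + t * Complex.I - 1 + 1))))) := by
    have e3 : (fun t : ℝ => (1:ℂ) / ((((2:ℝ) : ℂ) + t * Complex.I - 1) * (((2:ℝ) : ℂ) + t * Complex.I - 1 + 1)))
        = fun t : ℝ => (1 / ((((1:ℝ) : ℂ) + t * Complex.I) * (((1:ℝ) : ℂ) + t * Complex.I + 1))) := by
      ext t
      have e2 : ((2:ℝ) : ℂ) + t * Complex.I - 1 = (((1:ℝ) : ℂ) + t * Complex.I) := by
        push_cast; ring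
      rw [e2]
    have h4 := hk1.1
    rw [← e3] at h4
    refine (h4.const_mul (1/2)).bdd_mul (c := x ^ 2) ?_ (ae_of_all _ fun t => ?_)
    · exact (Continuous.const_cpow (by fun_prop) (Or.inl hxc)).aestronglyMeasurable
    · rw [Complex.norm_cpow_eq_rpow_re_of_pos hx0]; simp
  have hFsum : ∀ t, ∑' n, F n t = (x : ℂ) ^ (((2:ℝ) : ℂ) + t * Complex.I) * hH ((2:ℝ) + t * Complex.I) +
      (x : ℂ) ^ (((2:ℝ) : ℂ) + t * Complex.I) * (1 / 2 *
      (1 / ((((2:ℝ) : ℂ) + t * Complex.I - 1) * (((2:ℝ) : ℂ) + t * Complex.I - 1 + 1)))) := by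
    intro t
    simp only [hF]
    rw [tsum_mul_right, hH_eq (by simp)]
    simp only [hk, LSeries]
    ring
  have hbig : Integrable (fun t => ∑' n, F n t) := by
    set S := ∑' n, ‖LSeries.term Λc 2 n‖ * x ^ 2
    have hs2 : Summable fun n => ‖LSeries.term Λc 2 n‖ * x ^ 2 :=
      (ArithmeticFunction.LSeriesSummable_vonMangoldt (s := 2) (by norm_num)).norm.mul_right _
    refine (hIntg.norm.const_mul S).mono' ?_ (ae_of_all _ fun t => ?_)
    · refine aestronglyMeasurable_of_tendsto_ae atTop
        (f := fun N t => ∑ n ∈ Finset.range N, F n t) ?_ (ae_of_all _ fun t => ?_)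
      · intro N
        exact Finset.aestronglyMeasurable_fun_sum _ fun n _ => hmeas n
      · have : Summable fun n => F n t := by
          refine Summable.of_norm ?_
          simp_rw [hnorm]
          exact hs2.mul_right _
        exact this.hasSum.tendsto_sum_nat
    · refine tsum_of_norm_bounded (hs2.hasSum.mul_right _) fun n => (hnorm n t).le
  have hHi : Integrable (fun t : ℝ => (x : ℂ) ^ (((2:ℝ) : ℂ) + t * Complex.I) *
      hH ((2:ℝ) + t * Complex.I)) := by
    refine (hbig.sub hpi).congr (ae_of_all _ fun t => ?_)
    simp only [Pi.sub_apply]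
    rw [hFsum]; ring
  have hfin : ∫ t, ∑' n, F n t = (∫ t : ℝ, (x : ℂ) ^ (((2:ℝ) : ℂ) + t * Complex.I) * hH ((2:ℝ) + t * Complex.I)) +
      2 * Real.pi * (((x - 1) / 2 : ℝ) : ℂ) := by
    rw [← hpole, ← integral_add hHi hpi]
    exact integral_congr_ae (ae_of_all _ hFsum)
  rw [hfin] at hmain
  exact hmain

open MeasureTheory in
lemma perron_diff {x : ℝ} (hx : 1 ≤ x) : ∃ S : ℝ, Chebyshev.psi x ≤ S ∧ S ≤ Chebyshev.psi (x + 1) ∧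
    2 * Real.pi * ((S - x : ℝ) : ℂ) =
    ((x + 1 : ℝ) : ℂ) * (∫ t : ℝ, ((x + 1 : ℝ) : ℂ) ^ (((2:ℝ) : ℂ) + t * Complex.I) * hH ((2:ℝ) + t * Complex.I)) -
    (x : ℂ) * (∫ t : ℝ, (x : ℂ) ^ (((2:ℝ) : ℂ) + t * Complex.I) * hH ((2:ℝ) + t * Complex.I)) := by
  have hx0 : 0 < x := by linarith
  have h1 := perron hx
  have h2 := perron (x := x + 1) (by linarith)
  have h3 := (h2.mul_left ((x + 1 : ℝ) : ℂ)).sub (h1.mul_left (x : ℂ))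
  set g : ℕ → ℝ := fun n => ArithmeticFunction.vonMangoldt n * (max 0 (x + 1 - n) - max 0 (x - n)) with hg
  have hmx : ∀ y : ℝ, 0 < y → ∀ n : ℕ, y * max 0 (1 - n / y) = max 0 (y - n) := by
    intro y hy n
    rw [mul_max_of_nonneg _ _ hy.le]
    congr 1
    · simp
    · field_simp
  have hzero : ∀ n ∉ Finset.Ioc 0 ⌊x + 1⌋₊, g n = 0 := by
    intro n hn
    rw [Finset.mem_Ioc, not_and_or] at hn
    rcases hn with hn | hn
    · have : n = 0 := by omega
      simp [hg, this]
    · have : x + 1 < n := by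
        push Not at hn
        exact (Nat.floor_lt (by linarith)).1 hn
      simp only [hg]
      rw [max_eq_left (by linarith), max_eq_left (by linarith)]; simp
  have hgs : HasSum g _ := hasSum_sum_of_ne_finset_zero hzero
  set S := ∑ n ∈ Finset.Ioc 0 ⌊x + 1⌋₊, g n with hS
  refine ⟨S, ?_, ?_, ?_⟩
  · have : Chebyshev.psi x = ∑ n ∈ Finset.Ioc 0 ⌊x⌋₊, g n := by
      rw [Chebyshev.psi]
      refine Finset.sum_congr rfl fun n hn => ?_
      rw [Finset.mem_Ioc] at hn
      have hn' : (n : ℝ) ≤ x := (Nat.le_floor_iff hx0.le).1 hn.2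
      simp only [hg]
      rw [max_eq_right (by linarith), max_eq_right (by linarith)]; ring
    rw [this]
    refine Finset.sum_le_sum_of_subset_of_nonneg ?_ ?_
    · exact Finset.Ioc_subset_Ioc_right (Nat.floor_mono (by linarith))
    · intro n _ _
      refine mul_nonneg ArithmeticFunction.vonMangoldt_nonneg (sub_nonneg.2 ?_)
      exact max_le_max le_rfl (by linarith)
  · rw [Chebyshev.psi]
    refine Finset.sum_le_sum fun n hn => ?_
    refine mul_le_of_le_one_right ArithmeticFunction.vonMangoldt_nonneg ?_
    rw [sub_le_iff_le_add]
    refine max_le ?_ ?_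
    · have := le_max_left 0 (x - n); linarith
    · have := le_max_right 0 (x - n); linarith
  · have h4 : HasSum (fun n => 2 * Real.pi * ((g n : ℝ) : ℂ)) (2 * Real.pi * (S : ℂ)) :=
      (Complex.hasSum_ofReal.2 hgs).mul_left _
    have h5 := h3.unique (h4.congr_fun ?_)
    · push_cast at h5 ⊢
      linear_combination -h5
    · intro n
      simp only [hg]
      rw [← hmx x hx0, ← hmx (x+1) (by linarith)]
      push_cast; ring

lemma cpow_diff_bound {x : ℝ} (hx : 1 ≤ x) {w : ℂ} (hw : 1 ≤ w.re) :
    ‖((x + 1 : ℝ) : ℂ) ^ w - (x : ℂ) ^ w‖ ≤ ‖w‖ * (x + 1) ^ (w.re - 1) := by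
  have hw0 : w ≠ 0 := by rintro rfl; norm_num at hw
  have h := Convex.norm_image_sub_le_of_norm_hasDerivWithin_le (𝕜 := ℝ) (f := fun u : ℝ => (u : ℂ) ^ w)
    (f' := fun u : ℝ => w * (u : ℂ) ^ (w - 1)) (s := Set.Icc x (x+1)) (C := ‖w‖ * (x + 1) ^ (w.re - 1))
    (x := x) (y := x + 1) ?_ ?_ (convex_Icc _ _) ⟨le_rfl, by linarith⟩ ⟨by linarith, le_rfl⟩
  · simpa using h
  · intro u hu
    exact (hasDerivAt_ofReal_cpow_const (x := u) (by linarith [hu.1]) hw0).hasDerivWithinAt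
  · intro u hu
    have hu0 : 0 < u := by linarith [hu.1]
    rw [norm_mul, Complex.norm_cpow_eq_rpow_re_of_pos hu0]
    simp only [Complex.sub_re, Complex.one_re]
    exact mul_le_mul_of_nonneg_left (Real.rpow_le_rpow hu0.le hu.2 (by linarith)) (norm_nonneg _)

lemma interp_bound {v a b θ : ℝ} (hv : 0 ≤ v) (ha : v ≤ a) (hb : v ≤ b) (h0 : 0 ≤ θ) (h1 : θ ≤ 1) :
    v ≤ a ^ (1 - θ) * b ^ θ := by
  calc v = v ^ (1 - θ) * v ^ θ := by
        rw [← Real.rpow_add_of_nonneg hv (by linarith) h0]; simp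
    _ ≤ _ := by
        have ha0 := hv.trans ha
        exact mul_le_mul (Real.rpow_le_rpow hv ha (by linarith)) (Real.rpow_le_rpow hv hb h0)
          (by positivity) (by positivity)

open MeasureTheory in
lemma psi_diff_bound (RH : RiemannHypothesis) {β : ℝ} (h1 : 1/2 < β) (h2 : β ≤ 1) :
    ∃ K : ℝ, 0 ≤ K ∧ ∀ x : ℝ, 1 ≤ x → ∃ S : ℝ, Chebyshev.psi x ≤ S ∧ S ≤ Chebyshev.psi (x + 1) ∧
      |S - x| ≤ K * (x + 1) ^ β := by
  set ε := (β - 1/2) / 4 with hε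
  have hε0 : 0 < ε := by simp only [hε]; linarith
  have hε1 : ε ≤ 1/8 := by simp only [hε]; linarith
  set σ := 1/2 + 2 * ε with hσ
  obtain ⟨C, hC, hCb⟩ := hH_bound RH (σ₀ := σ) (by simp only [hσ]; linarith) hε0
  have hIntg : Integrable (fun t : ℝ => (1 + ‖t‖) ^ (-(1 + ε))) :=
    integrable_one_add_norm (by simp; linarith)
  set K₀ := ∫ t : ℝ, 3 * C * (1 + ‖t‖) ^ (-(1 + ε)) with hK₀
  have hK₀0 : 0 ≤ K₀ := integral_nonneg fun t => by positivity
  have hdiff : ∀ s : ℂ, σ ≤ s.re → DifferentiableAt ℂ hH s := fun s hs =>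
    hH_diff RH (by simp only [hσ] at hs; linarith)
  have hbd : ∀ y : ℝ, 1 ≤ y → ∀ s : ℂ, σ ≤ s.re → s.re ≤ 2 →
      ‖(y : ℂ) ^ s * hH s‖ ≤ (y ^ 2 * C) * (1 + |s.im|) ^ (-(2 - ε)) := by
    intro y hy s hs hs2
    rw [norm_mul, Complex.norm_cpow_eq_rpow_re_of_pos (by linarith), mul_assoc, neg_sub]
    have : y ^ s.re ≤ y ^ 2 := by
      rw [← Real.rpow_two]
      exact Real.rpow_le_rpow_of_exponent_le hy hs2
    exact mul_le_mul this (hCb s hs hs2) (norm_nonneg _) (by positivity)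
  have hd : ∀ y : ℝ, 1 ≤ y → DifferentiableOn ℂ (fun s : ℂ => (y : ℂ) ^ s * hH s)
      {s | σ ≤ s.re ∧ s.re ≤ 2} := by
    intro y hy s hs
    have hy0 : (y : ℂ) ≠ 0 := by exact_mod_cast (by linarith : y ≠ 0)
    exact ((DifferentiableAt.const_cpow differentiableAt_id (Or.inl hy0)).mul
      (hdiff s hs.1)).differentiableWithinAt
  have hshift : ∀ y : ℝ, 1 ≤ y → ∫ t : ℝ, (y : ℂ) ^ ((σ : ℂ) + t * Complex.I) * hH (σ + t * Complex.I) =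
      ∫ t : ℝ, (y : ℂ) ^ (((2:ℝ) : ℂ) + t * Complex.I) * hH ((2:ℝ) + t * Complex.I) := by
    intro y hy
    exact contour_shift (f := fun s : ℂ => (y : ℂ) ^ s * hH s) (a := σ) (b := 2)
      (by simp only [hσ]; linarith) (by linarith : 1 < 2 - ε) (hd y hy) (hbd y hy)
  have hcont : ∀ y : ℝ, 1 ≤ y → Continuous (fun t : ℝ => (y : ℂ) ^ ((σ : ℂ) + t * Complex.I) * hH (σ + t * Complex.I)) := by
    intro y hy
    have hy0 : (y : ℂ) ≠ 0 := by exact_mod_cast (by linarith : y ≠ 0)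
    refine (Continuous.const_cpow (by fun_prop) (Or.inl hy0)).mul ?_
    rw [continuous_iff_continuousAt]
    intro t
    exact ContinuousAt.comp (f := fun t : ℝ => (σ : ℂ) + t * Complex.I) (g := hH)
      (hdiff _ (by simp)).continuousAt (by fun_prop)
  have hI : ∀ y : ℝ, 1 ≤ y → Integrable (fun t : ℝ => (y : ℂ) ^ ((σ : ℂ) + t * Complex.I) * hH (σ + t * Complex.I)) := by
    intro y hy
    refine integrable_decay (C := y ^ 2 * C) (hcont y hy).aestronglyMeasurable (by linarith : 1 < 2 - ε) fun t => ?_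
    have := hbd y hy (σ + t * Complex.I) (by simp) (by simp; simp only [hσ]; linarith)
    simpa using this
  refine ⟨K₀, hK₀0, fun x hx => ?_⟩
  obtain ⟨S, hS1, hS2, hS3⟩ := perron_diff hx
  refine ⟨S, hS1, hS2, ?_⟩
  rw [← hshift x hx, ← hshift (x+1) (by linarith), ← integral_const_mul, ← integral_const_mul,
    ← integral_sub ((hI _ (by linarith)).const_mul _) ((hI _ hx).const_mul _)] at hS3
  have hle : ‖2 * Real.pi * ((S - x : ℝ) : ℂ)‖ ≤ K₀ * (x + 1) ^ β := by
    rw [hS3, hK₀, ← integral_mul_const]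
    refine norm_integral_le_of_norm_le ((hIntg.const_mul _).mul_const _) (ae_of_all _ fun t => ?_)
    set s : ℂ := (σ : ℂ) + t * Complex.I with hs
    have hsre : s.re = σ := by simp [hs]
    have hsim : s.im = t := by simp [hs]
    have hxc : (x : ℂ) ≠ 0 := by exact_mod_cast (by linarith : x ≠ 0)
    have hxc1 : ((x + 1 : ℝ) : ℂ) ≠ 0 := by exact_mod_cast (by linarith : x + 1 ≠ 0)
    have e : ((x + 1 : ℝ) : ℂ) * (((x + 1 : ℝ) : ℂ) ^ s * hH s) - (x : ℂ) * ((x : ℂ) ^ s * hH s) =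
        (((x + 1 : ℝ) : ℂ) ^ (s + 1) - (x : ℂ) ^ (s + 1)) * hH s := by
      rw [Complex.cpow_add s 1 hxc, Complex.cpow_add s 1 hxc1, Complex.cpow_one, Complex.cpow_one]
      ring
    rw [e, norm_mul]
    have hX1 : 1 ≤ 1 + ‖t‖ := by simp
    set X := 1 + ‖t‖ with hX
    have hX0 : 0 < X := by linarith
    have hh : ‖hH s‖ ≤ C * X ^ (ε - 2) := by
      have := hCb s (by rw [hsre]) (by rw [hsre]; simp only [hσ]; linarith)
      rwa [hsim, ← Real.norm_eq_abs] at this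
    have hx10 : 0 < x + 1 := by linarith
    have b1 : ‖((x + 1 : ℝ) : ℂ) ^ (s + 1) - (x : ℂ) ^ (s + 1)‖ ≤ 3 * X * (x + 1) ^ σ := by
      refine (cpow_diff_bound hx (by simp [hsre]; simp only [hσ]; linarith)).trans ?_
      have : (s + 1).re - 1 = σ := by simp [hsre]
      rw [this]
      gcongr
      have h5 := Complex.norm_le_abs_re_add_abs_im (s + 1)
      have h6 : |(s+1).re| ≤ 2 := by
        rw [abs_of_nonneg] <;> simp [hsre] <;> simp only [hσ] <;> linarith
      have h7 : |(s+1).im| = ‖t‖ := by simp [hsim]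
      rw [h7] at h5
      simp only [hX]; linarith [norm_nonneg t]
    have b2 : ‖((x + 1 : ℝ) : ℂ) ^ (s + 1) - (x : ℂ) ^ (s + 1)‖ ≤ 3 * (x + 1) ^ (σ + 1) := by
      refine (norm_sub_le _ _).trans ?_
      rw [Complex.norm_cpow_eq_rpow_re_of_pos hx10, Complex.norm_cpow_eq_rpow_re_of_pos (by linarith)]
      have : (s + 1).re = σ + 1 := by simp [hsre]
      rw [this]
      have h8 : x ^ (σ + 1) ≤ (x + 1) ^ (σ + 1) :=
        Real.rpow_le_rpow (by linarith) (by linarith) (by simp only [hσ]; linarith)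
      have : 0 ≤ (x + 1) ^ (σ + 1) := by positivity
      linarith
    have b3 := interp_bound (norm_nonneg _) b1 b2 (θ := 2 * ε) (by linarith) (by linarith)
    have e3 : (3 * X * (x + 1) ^ σ) ^ (1 - 2 * ε) * (3 * (x + 1) ^ (σ + 1)) ^ (2 * ε) =
        3 * X ^ (1 - 2 * ε) * (x + 1) ^ β := by
      rw [Real.mul_rpow (by positivity) (by positivity), Real.mul_rpow (by positivity) (by positivity),
        Real.mul_rpow (by positivity) (by positivity), ← Real.rpow_mul hx10.le, ← Real.rpow_mul hx10.le]
      have : β = σ * (1 - 2 * ε) + (σ + 1) * (2 * ε) := by simp only [hσ, hε]; ring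
      rw [this, Real.rpow_add hx10]
      have h9 : (3:ℝ) ^ (1 - 2 * ε) * 3 ^ (2 * ε) = 3 := by
        rw [← Real.rpow_add (by norm_num)]; simp
      linear_combination (X ^ (1 - 2 * ε) * (x + 1) ^ (σ * (1 - 2 * ε)) * (x + 1) ^ ((σ + 1) * (2 * ε))) * h9
    rw [e3] at b3
    calc _ ≤ (3 * X ^ (1 - 2 * ε) * (x + 1) ^ β) * (C * X ^ (ε - 2)) := by gcongr
      _ = 3 * C * (X ^ (1 - 2 * ε) * X ^ (ε - 2)) * (x + 1) ^ β := by ring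
      _ = _ := by
        rw [← Real.rpow_add hX0]; congr 3; ring
  rw [norm_mul, Complex.norm_real, Real.norm_eq_abs] at hle
  have h2pi : (1:ℝ) ≤ ‖(2 * Real.pi : ℂ)‖ := by
    simp [abs_of_pos Real.pi_pos]; linarith [Real.pi_gt_three]
  nlinarith [abs_nonneg (S - x)]

lemma psi_bound (RH : RiemannHypothesis) {β : ℝ} (h1 : 1/2 < β) (h2 : β ≤ 1) :
    ∃ K : ℝ, 0 ≤ K ∧ ∀ x : ℝ, 1 ≤ x → |Chebyshev.psi x - x| ≤ K * x ^ β := by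
  obtain ⟨K, hK, h⟩ := psi_diff_bound RH h1 h2
  refine ⟨2 * K + 2, by positivity, fun x hx => ?_⟩
  have hxβ : 1 ≤ x ^ β := Real.one_le_rpow hx (by linarith)
  rw [abs_le]
  constructor
  · rcases lt_or_ge x 2 with h3 | h3
    · rw [Chebyshev.psi_eq_zero_of_lt_two h3]
      nlinarith
    · obtain ⟨S, -, hS2, hS3⟩ := h (x - 1) (by linarith)
      rw [sub_add_cancel] at hS2 hS3
      have := (abs_le.1 hS3).1
      nlinarith
  · obtain ⟨S, hS1, -, hS3⟩ := h x hx
    have h4 := (abs_le.1 hS3).2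
    have h5 : (x + 1) ^ β ≤ 2 * x ^ β := by
      calc (x + 1) ^ β ≤ (2 * x) ^ β := Real.rpow_le_rpow (by linarith) (by linarith) (by linarith)
        _ = 2 ^ β * x ^ β := Real.mul_rpow (by norm_num) (by linarith)
        _ ≤ 2 ^ (1:ℝ) * x ^ β := by gcongr; norm_num
        _ = _ := by simp
    nlinarith

lemma theta_bound (RH : RiemannHypothesis) {β : ℝ} (h1 : 1/2 < β) (h2 : β ≤ 1) :
    ∃ K : ℝ, 0 ≤ K ∧ ∀ x : ℝ, 1 ≤ x → |Chebyshev.theta x - x| ≤ K * x ^ β := by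
  obtain ⟨K, hK, h⟩ := psi_bound RH h1 h2
  obtain ⟨C, hC⟩ := Chebyshev.psi_sub_theta_le_mul_sqrt
  refine ⟨K + |C|, by positivity, fun x hx => ?_⟩
  have h3 := abs_le.1 (h x hx)
  have h4 : C * √x ≤ |C| * x ^ β := by
    refine mul_le_mul (le_abs_self C) ?_ (Real.sqrt_nonneg _) (abs_nonneg _)
    rw [Real.sqrt_eq_rpow]
    exact Real.rpow_le_rpow_of_exponent_le hx h1.le
  have h5 := hC x
  have h6 := Chebyshev.theta_le_psi x
  have h7 : 0 ≤ |C| * x ^ β := by positivity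
  rw [abs_le]
  constructor <;> nlinarith

/-- The entire part of the exponential integral. -/
noncomputable def einS (z : ℂ) : ℂ :=
    ∑' k : ℕ, (-z) ^ (k + 1) / (((k + 1) * Nat.factorial (k + 1) : ℕ) : ℂ)

lemma einS_hasDerivAt {z : ℂ} (hz : z ≠ 0) : HasDerivAt einS ((Complex.exp (-z) - 1) / z) z := by
  set R := ‖z‖ + 1 with hR
  set F : ℕ → ℂ → ℂ := fun k z => (-z) ^ (k + 1) / (((k + 1) * Nat.factorial (k + 1) : ℕ) : ℂ) with hF
  have hu : Summable fun k : ℕ => R ^ (k + 1) / (Nat.factorial (k + 1)) :=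
    (summable_nat_add_iff 1).2 (Real.summable_pow_div_factorial R)
  have hd : ∀ k, Differentiable ℂ (F k) := fun k => by simp only [hF]; fun_prop
  have hle : ∀ k, ∀ w ∈ Metric.ball (0:ℂ) R, ‖F k w‖ ≤ R ^ (k + 1) / (Nat.factorial (k + 1)) := by
    intro k w hw
    simp only [hF]
    rw [norm_div, norm_pow, norm_neg, Complex.norm_natCast]
    have hw' : ‖w‖ ≤ R := by simpa using (mem_ball_zero_iff.1 hw).le
    have : ((Nat.factorial (k+1) : ℕ) : ℝ) ≤ (((k + 1) * Nat.factorial (k + 1) : ℕ) : ℝ) := by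
      exact_mod_cast Nat.le_mul_of_pos_left _ (Nat.succ_pos k)
    have h0 : (0:ℝ) < ((Nat.factorial (k+1) : ℕ) : ℝ) := by exact_mod_cast Nat.factorial_pos _
    gcongr
  have hz' : z ∈ Metric.ball (0:ℂ) R := by rw [mem_ball_zero_iff]; simp [hR]
  have hdiff : DifferentiableAt ℂ einS z :=
    (Complex.differentiableOn_tsum_of_summable_norm hu (fun k => (hd k).differentiableOn)
      Metric.isOpen_ball hle).differentiableAt (Metric.isOpen_ball.mem_nhds hz')
  have hs := Complex.hasSum_deriv_of_summable_norm hu (fun k => (hd k).differentiableOn)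
      Metric.isOpen_ball hle hz'
  have hder : ∀ k, deriv (F k) z = ((-z) ^ (k + 1) / (Nat.factorial (k + 1) : ℂ)) / z := by
    intro k
    have h1 : HasDerivAt (F k) (((k + 1 : ℕ) : ℂ) * (-z) ^ k * (-1) / (((k + 1) * Nat.factorial (k + 1) : ℕ) : ℂ)) z := by
      have := (((hasDerivAt_id z).neg).pow (k+1)).div_const (((k + 1) * Nat.factorial (k + 1) : ℕ) : ℂ)
      simpa [hF] using this
    rw [h1.deriv]
    have hk : ((k:ℂ) + 1) ≠ 0 := by exact_mod_cast Nat.succ_ne_zero k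
    have hk2 : ((Nat.factorial (k+1) : ℕ) : ℂ) ≠ 0 := by exact_mod_cast Nat.factorial_ne_zero _
    rw [Nat.cast_mul]
    push_cast at hk2 ⊢
    rw [pow_succ]
    field_simp
  have he : HasSum (fun k : ℕ => ((-z) ^ (k + 1) / (Nat.factorial (k + 1) : ℂ)) / z) ((Complex.exp (-z) - 1) / z) := by
    have h2 : HasSum (fun k : ℕ => (-z) ^ k / (Nat.factorial k : ℂ)) (Complex.exp (-z)) := by
      rw [Complex.exp_eq_exp_ℂ]
      exact NormedSpace.expSeries_div_hasSum_exp (-z)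
    have h3 := (hasSum_nat_add_iff' 1).2 h2
    simp only [Finset.range_one, Finset.sum_singleton, pow_zero, Nat.factorial_zero, Nat.cast_one, div_one] at h3
    exact h3.div_const z
  simp_rw [hder] at hs
  have := hdiff.hasDerivAt
  have e : deriv einS z = (Complex.exp (-z) - 1) / z := hs.unique he
  rwa [e] at this

lemma E1_eq (z : ℂ) : expIntegralE1 z = -(Real.eulerMascheroniConstant : ℂ) - Complex.log z - einS z := rfl

lemma E1_hasDerivAt {z : ℂ} (hz : z ∈ Complex.slitPlane) :
    HasDerivAt expIntegralE1 (-Complex.exp (-z) / z) z := by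
  have h0 := Complex.slitPlane_ne_zero hz
  have : HasDerivAt expIntegralE1 _ z :=
    ((hasDerivAt_const z (-(Real.eulerMascheroniConstant : ℂ))).sub (Complex.hasDerivAt_log hz)).sub
      (einS_hasDerivAt h0)
  refine this.congr_deriv ?_
  field_simp; ring

open MeasureTheory in
lemma gamma_int : IntegrableOn (fun t : ℝ => ((Real.log t * Real.exp (-t) : ℝ) : ℂ)) (Set.Ioi 0) ∧
    ∫ t : ℝ in Set.Ioi 0, ((Real.log t * Real.exp (-t) : ℝ) : ℂ) = -(Real.eulerMascheroniConstant : ℂ) := by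
  have h1 := Complex.hasDerivAt_GammaIntegral (s := 1) (by simp)
  have h2 : Complex.Gamma =ᶠ[nhds 1] Complex.GammaIntegral := by
    have : {s : ℂ | 0 < s.re} ∈ nhds (1:ℂ) :=
      (isOpen_lt continuous_const Complex.continuous_re).mem_nhds (by simp)
    filter_upwards [this] with s hs
    exact Complex.Gamma_eq_integral hs
  have h3 := (h1.congr_of_eventuallyEq h2).unique Complex.hasDerivAt_Gamma_one
  have h4 : ∫ t : ℝ in Set.Ioi 0, ((Real.log t * Real.exp (-t) : ℝ) : ℂ) = -(Real.eulerMascheroniConstant : ℂ) := by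
    rw [← h3]
    congr 1; ext t; simp
  refine ⟨?_, h4⟩
  by_contra hn
  rw [integral_undef hn] at h4
  have : Real.eulerMascheroniConstant = 0 := by
    have := neg_eq_zero.1 h4.symm
    exact_mod_cast this
  linarith [Real.one_half_lt_eulerMascheroniConstant]

lemma einS_zero : einS 0 = 0 := by simp [einS]

lemma einS_cont0 : ContinuousAt einS 0 := by
  have hu : Summable fun k : ℕ => (1:ℝ) ^ (k + 1) / (Nat.factorial (k + 1)) :=
    (summable_nat_add_iff 1).2 (Real.summable_pow_div_factorial 1)
  have hd : DifferentiableOn ℂ einS (Metric.ball (0:ℂ) 1) := by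
    refine Complex.differentiableOn_tsum_of_summable_norm hu (fun k => ?_)
      Metric.isOpen_ball ?_
    · exact Differentiable.differentiableOn (by fun_prop)
    · intro k w hw
      rw [norm_div, norm_pow, norm_neg, Complex.norm_natCast]
      have hw' : ‖w‖ ≤ 1 := by simpa using (mem_ball_zero_iff.1 hw).le
      have : ((Nat.factorial (k+1) : ℕ) : ℝ) ≤ (((k + 1) * Nat.factorial (k + 1) : ℕ) : ℝ) := by
        exact_mod_cast Nat.le_mul_of_pos_left _ (Nat.succ_pos k)
      have h0 : (0:ℝ) < ((Nat.factorial (k+1) : ℕ) : ℝ) := by exact_mod_cast Nat.factorial_pos _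
      gcongr
  exact (hd.differentiableAt (Metric.ball_mem_nhds 0 one_pos)).continuousAt

open MeasureTheory in
lemma E1_tendsto : Tendsto (fun x : ℝ => expIntegralE1 (x : ℂ)) atTop (nhds 0) := by
  set Φ : ℝ → ℂ := fun x => (((1 - Real.exp (-x)) * Real.log x : ℝ) : ℂ) + einS (x : ℂ) with hΦ
  obtain ⟨hi, hv⟩ := gamma_int
  have hder : ∀ x ∈ Set.Ioi (0:ℝ), HasDerivAt Φ ((Real.log x * Real.exp (-x) : ℝ) : ℂ) x := by
    intro x hx
    have hx0 : x ≠ 0 := (Set.mem_Ioi.1 hx).ne'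
    have hxc : (x : ℂ) ≠ 0 := by exact_mod_cast hx0
    have h1 : HasDerivAt (fun x : ℝ => (1 - Real.exp (-x)) * Real.log x)
        (Real.exp (-x) * Real.log x + (1 - Real.exp (-x)) * x⁻¹) x := by
      have h2 : HasDerivAt (fun x : ℝ => 1 - Real.exp (-x)) (Real.exp (-x)) x := by
        have := ((hasDerivAt_neg x).exp).const_sub 1
        refine this.congr_deriv (by ring)
      exact h2.mul (Real.hasDerivAt_log hx0)
    have h3 : HasDerivAt Φ _ x := h1.ofReal_comp.add (einS_hasDerivAt hxc).comp_ofReal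
    refine h3.congr_deriv ?_
    push_cast
    field_simp
    ring
  have hΦ0 : Φ 0 = 0 := by simp [hΦ, einS_zero]
  have hc : ContinuousWithinAt Φ (Set.Ici 0) 0 := by
    refine ContinuousWithinAt.add ?_ ?_
    · refine Complex.continuous_ofReal.continuousAt.comp_continuousWithinAt ?_
      rw [ContinuousWithinAt]
      simp only [neg_zero, Real.exp_zero, sub_self, Real.log_zero, mul_zero]
      have h5 : Tendsto (fun x : ℝ => |x * Real.log x|) (nhdsWithin 0 (Set.Ici 0)) (nhds 0) := by
        have := (Real.continuous_mul_log.abs.tendsto 0).mono_left (nhdsWithin_le_nhds (s := Set.Ici 0))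
        simpa using this
      refine squeeze_zero_norm' ?_ h5
      filter_upwards [self_mem_nhdsWithin] with x hx
      have hx' : 0 ≤ x := hx
      have h8 : Real.exp (-x) ≤ 1 := by simpa using hx'
      have h9 := Real.add_one_le_exp (-x)
      rw [Real.norm_eq_abs, abs_mul, abs_mul]
      gcongr
      · linarith
    · refine ContinuousAt.continuousWithinAt ?_
      refine ContinuousAt.comp (f := fun x : ℝ => (x : ℂ)) (g := einS) ?_ Complex.continuous_ofReal.continuousAt
      simpa using einS_cont0
  have hlim := tendsto_limUnder_of_hasDerivAt_of_integrableOn_Ioi hder hi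
  have hval := integral_Ioi_of_hasDerivAt_of_tendsto hc hder hi hlim
  rw [hv, hΦ0, sub_zero] at hval
  rw [← hval] at hlim
  have hsmall : Tendsto (fun x : ℝ => ((Real.exp (-x) * Real.log x : ℝ) : ℂ)) atTop (nhds 0) := by
    have h6 : Tendsto (fun x : ℝ => Real.exp (-x) * Real.log x) atTop (nhds 0) := by
      have h7 := Real.tendsto_pow_mul_exp_neg_atTop_nhds_zero 1
      refine squeeze_zero' ?_ ?_ h7
      · filter_upwards [eventually_ge_atTop 1] with x hx
        exact mul_nonneg (Real.exp_nonneg _) (Real.log_nonneg hx)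
      · filter_upwards [eventually_ge_atTop 1] with x hx
        rw [pow_one, mul_comm]
        gcongr
        have := Real.log_le_sub_one_of_pos (show 0 < x by linarith)
        linarith
    have := (Complex.continuous_ofReal.tendsto 0).comp h6
    rw [Complex.ofReal_zero] at this
    exact this
  have hfin := ((tendsto_const_nhds (x := -(Real.eulerMascheroniConstant : ℂ))).sub hlim).sub hsmall
  rw [sub_self, sub_zero] at hfin
  refine hfin.congr' ?_
  filter_upwards [eventually_gt_atTop 0] with x hx
  rw [E1_eq, ← Complex.ofReal_log hx.le]
  simp only [hΦ]
  push_cast; ring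

lemma E1_log_hasDerivAt {s : ℂ} (hs : s - 1 ∈ Complex.slitPlane) {x : ℝ} (hx : 1 < x) :
    HasDerivAt (fun x : ℝ => expIntegralE1 ((s - 1) * (Real.log x : ℂ)))
      (-((x : ℂ) ^ (-s) / (Real.log x : ℂ))) x := by
  have hl : 0 < Real.log x := Real.log_pos hx
  have hx0 : x ≠ 0 := by linarith
  have hxc : (x : ℂ) ≠ 0 := by exact_mod_cast hx0
  have hlc : ((Real.log x : ℝ) : ℂ) ≠ 0 := by exact_mod_cast hl.ne'
  have hsp : (s - 1) * (Real.log x : ℂ) ∈ Complex.slitPlane := by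
    rw [mul_comm]
    rw [Complex.mem_slitPlane_iff] at hs ⊢
    simp only [Complex.re_ofReal_mul, Complex.im_ofReal_mul]
    rcases hs with h | h
    · left; positivity
    · right; exact mul_ne_zero hl.ne' h
  have h1 : HasDerivAt (fun x : ℝ => (s - 1) * (Real.log x : ℂ)) ((s - 1) * ((x⁻¹ : ℝ) : ℂ)) x :=
    ((Real.hasDerivAt_log hx0).ofReal_comp).const_mul _
  have h2 : HasDerivAt (fun x : ℝ => expIntegralE1 ((s - 1) * (Real.log x : ℂ))) _ x :=
    HasDerivAt.comp (h₂ := expIntegralE1) (h := fun x : ℝ => (s - 1) * (Real.log x : ℂ)) x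
      (E1_hasDerivAt hsp) h1
  refine h2.congr_deriv ?_
  have hs0 : s - 1 ≠ 0 := Complex.slitPlane_ne_zero hs
  have h3 : Complex.exp (-((s - 1) * (Real.log x : ℂ))) = (x : ℂ) ^ (-s) * x := by
    have h4 : (x : ℂ) ^ (-s) * x = (x : ℂ) ^ (-s + 1) := by
      rw [Complex.cpow_add _ _ hxc, Complex.cpow_one]
    rw [h4, Complex.cpow_def_of_ne_zero hxc, Complex.ofReal_log (by linarith)]
    congr 1; ring
  rw [h3]
  push_cast
  field_simp

/-- the weight `t^(-s)/log t` -/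
noncomputable def wf (s : ℂ) (t : ℝ) : ℂ := (t : ℂ) ^ (-s) / (Real.log t : ℂ)

/-- its derivative -/
noncomputable def wf' (s : ℂ) (t : ℝ) : ℂ :=
  -s * (t : ℂ) ^ (-s - 1) / (Real.log t : ℂ) - (t : ℂ) ^ (-s - 1) / (Real.log t : ℂ) ^ 2

lemma wf_hasDerivAt {s : ℂ} (hs : s ≠ 0) {t : ℝ} (ht : 1 < t) : HasDerivAt (wf s) (wf' s t) t := by
  have hl : 0 < Real.log t := Real.log_pos ht
  have ht0 : t ≠ 0 := by linarith
  have htc : (t : ℂ) ≠ 0 := by exact_mod_cast ht0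
  have hlc : ((Real.log t : ℝ) : ℂ) ≠ 0 := by exact_mod_cast hl.ne'
  have h1 := hasDerivAt_ofReal_cpow_const ht0 (neg_ne_zero.2 hs)
  have h2 := (Real.hasDerivAt_log ht0).ofReal_comp
  have h3 : HasDerivAt (wf s) _ t := h1.div h2 hlc
  refine h3.congr_deriv ?_
  rw [wf']
  have h4 : (t : ℂ) ^ (-s) = (t : ℂ) ^ (-s - 1) * t := by
    conv_lhs => rw [show -s = (-s - 1) + 1 by ring]
    rw [Complex.cpow_add _ _ htc, Complex.cpow_one]
  rw [h4]
  push_cast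
  field_simp

lemma wf'_continuousOn (s : ℂ) : ContinuousOn (wf' s) (Set.Ioi 1) := by
  intro t ht
  have ht1 : 1 < t := ht
  have hl : 0 < Real.log t := Real.log_pos ht1
  have ht0 : t ≠ 0 := by linarith
  have hlc : ((Real.log t : ℝ) : ℂ) ≠ 0 := by exact_mod_cast hl.ne'
  have hc : ContinuousAt (fun t : ℝ => (t : ℂ) ^ (-s - 1)) t :=
    Complex.continuousAt_ofReal_cpow_const _ _ (Or.inr ht0)
  have hlg : ContinuousAt (fun t : ℝ => (Real.log t : ℂ)) t :=
    Complex.continuous_ofReal.continuousAt.comp (Real.continuousAt_log ht0)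
  refine ContinuousAt.continuousWithinAt ?_
  exact ((continuousAt_const.mul hc).div hlg hlc).sub (hc.div (hlg.pow 2) (pow_ne_zero 2 hlc))

lemma uwf_hasDerivAt {s : ℂ} (hs : s - 1 ∈ Complex.slitPlane) (hs0 : s ≠ 0) {t : ℝ} (ht : 1 < t) :
    HasDerivAt (fun t : ℝ => (t : ℂ) * wf s t + expIntegralE1 ((s - 1) * (Real.log t : ℂ)))
      (wf' s t * t) t := by
  have h1 : HasDerivAt (fun t : ℝ => (t : ℂ) * wf s t + expIntegralE1 ((s - 1) * (Real.log t : ℂ))) _ t :=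
    ((hasDerivAt_id t).ofReal_comp.mul (wf_hasDerivAt hs0 ht)).add (E1_log_hasDerivAt hs ht)
  refine h1.congr_deriv ?_
  simp [wf]; ring

open MeasureTheory intervalIntegral in
lemma abel {s : ℂ} (hs : s - 1 ∈ Complex.slitPlane) (hs0 : s ≠ 0) {x : ℝ} (hx : 2 ≤ x) :
    -expIntegralE1 ((s - 1) * (Real.log x : ℂ)) - ∑ p ∈ Nat.primesBelow (⌊x⌋₊ + 1), (p : ℂ) ^ (-s) =
    -expIntegralE1 ((s - 1) * (Real.log 2 : ℂ)) - 2 * wf s 2 - wf s x * ((Chebyshev.theta x - x : ℝ) : ℂ)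
      + ∫ t in (2:ℝ)..x, wf' s t * ((Chebyshev.theta t - t : ℝ) : ℂ) := by
  set c : ℕ → ℂ := fun n => if n.Prime then ((Real.log n : ℝ) : ℂ) else 0 with hc
  have hθ : ∀ t : ℝ, ∑ k ∈ Finset.Icc 0 ⌊t⌋₊, c k = ((Chebyshev.theta t : ℝ) : ℂ) := by
    intro t
    rw [Chebyshev.theta_eq_sum_Icc, Finset.sum_filter]
    push_cast
    refine Finset.sum_congr rfl fun n _ => ?_
    simp only [hc]; split_ifs <;> simp
  have hderiv : ∀ t ∈ Set.Icc 2 x, deriv (wf s) t = wf' s t := fun t ht =>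
    (wf_hasDerivAt hs0 (by linarith [ht.1])).deriv
  have hcont : ContinuousOn (wf' s) (Set.Icc 2 x) :=
    (wf'_continuousOn s).mono fun t ht => by
      have := ht.1
      show 1 < t
      linarith
  have habel := sum_mul_eq_sub_integral_mul₁ c (f := wf s) (by simp [hc]) (by simp [hc]) x
    (fun t ht => (wf_hasDerivAt hs0 (by linarith [ht.1])).differentiableAt)
    ((hcont.congr hderiv).integrableOn_Icc)
  simp_rw [hθ] at habel
  have hsum : ∑ k ∈ Finset.Icc 0 ⌊x⌋₊, wf s k * c k =
      ∑ p ∈ Nat.primesBelow (⌊x⌋₊ + 1), (p : ℂ) ^ (-s) := by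
    rw [Nat.primesBelow, Finset.sum_filter, Nat.range_succ_eq_Icc_zero]
    refine Finset.sum_congr rfl fun n _ => ?_
    simp only [hc]
    split_ifs with h
    · have : ((Real.log n : ℝ) : ℂ) ≠ 0 := by
        exact_mod_cast (Real.log_pos (by exact_mod_cast h.one_lt)).ne'
      rw [wf, div_mul_cancel₀ _ this, Complex.ofReal_natCast]
    · simp
  have hmono : Measurable Chebyshev.theta := Chebyshev.theta_mono.measurable
  have hIntg1 : IntervalIntegrable (fun t : ℝ => wf' s t * (t : ℂ)) volume 2 x := by
    refine ContinuousOn.intervalIntegrable ?_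
    rw [Set.uIcc_of_le hx]
    exact hcont.mul Complex.continuous_ofReal.continuousOn
  have hIntg2 : IntervalIntegrable (fun t : ℝ => wf' s t * ((Chebyshev.theta t : ℝ) : ℂ)) volume 2 x := by
    have hc' : IntervalIntegrable (fun t => ((Chebyshev.theta t : ℝ) : ℂ)) volume 2 x :=
      ⟨(Chebyshev.theta_mono.intervalIntegrable (a := 2) (b := x)).1.ofReal,
        (Chebyshev.theta_mono.intervalIntegrable (a := 2) (b := x)).2.ofReal⟩
    exact hc'.continuousOn_mul (by rwa [Set.uIcc_of_le hx])
  have hftc : ∫ t in (2:ℝ)..x, wf' s t * (t : ℂ) =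
      ((x : ℂ) * wf s x + expIntegralE1 ((s - 1) * (Real.log x : ℂ))) -
      (((2:ℝ) : ℂ) * wf s 2 + expIntegralE1 ((s - 1) * (Real.log 2 : ℂ))) := by
    refine integral_eq_sub_of_hasDerivAt (f := fun t : ℝ => (t : ℂ) * wf s t + expIntegralE1 ((s - 1) * (Real.log t : ℂ))) (fun t ht => ?_) hIntg1
    rw [Set.uIcc_of_le hx] at ht
    exact uwf_hasDerivAt hs hs0 (by linarith [ht.1])
  have hI : ∫ t in Set.Ioc 2 x, deriv (wf s) t * ((Chebyshev.theta t : ℝ) : ℂ) =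
      ∫ t in (2:ℝ)..x, wf' s t * ((Chebyshev.theta t : ℝ) : ℂ) := by
    rw [integral_of_le hx]
    refine setIntegral_congr_fun measurableSet_Ioc fun t ht => ?_
    show deriv (wf s) t * _ = wf' s t * _
    rw [hderiv t ⟨ht.1.le, ht.2⟩]
  have hR : ∫ t in (2:ℝ)..x, wf' s t * ((Chebyshev.theta t - t : ℝ) : ℂ) =
      (∫ t in (2:ℝ)..x, wf' s t * ((Chebyshev.theta t : ℝ) : ℂ)) - ∫ t in (2:ℝ)..x, wf' s t * (t : ℂ) := by
    rw [← integral_sub hIntg2 hIntg1]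
    refine integral_congr fun t _ => ?_
    push_cast; ring
  rw [hsum, hI] at habel
  rw [hR, hftc, habel]
  push_cast; ring

noncomputable def g1 (t : ℝ) : ℂ := (((Chebyshev.theta t - t) / Real.log t : ℝ) : ℂ)
noncomputable def g2 (t : ℝ) : ℂ := (((Chebyshev.theta t - t) / Real.log t ^ 2 : ℝ) : ℂ)

open MeasureTheory in
noncomputable def Afun (s : ℂ) : ℂ :=
  -expIntegralE1 ((s - 1) * (Real.log 2 : ℂ)) - 2 * wf s 2
    + (-s * (∫ t in Set.Ioi (2:ℝ), g1 t * (t:ℂ)^(-s-1)) - ∫ t in Set.Ioi (2:ℝ), g2 t * (t:ℂ)^(-s-1))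

open MeasureTheory in
lemma Afun_spec (RH : RiemannHypothesis) {s : ℂ} (hs : 1/2 < s.re) (hs1 : s - 1 ∈ Complex.slitPlane) :
    DifferentiableAt ℂ Afun s ∧
    Tendsto (fun x : ℝ => -expIntegralE1 ((s - 1) * (Real.log x : ℂ)) -
      ∑ p ∈ Nat.primesBelow (⌊x⌋₊ + 1), (p : ℂ) ^ (-s)) atTop (nhds (Afun s)) := by
  have hs0 : s ≠ 0 := by rintro rfl; norm_num at hs
  obtain ⟨β, hβ1, hβ2⟩ := exists_between (show 1/2 < min 1 s.re from lt_min (by norm_num) hs)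
  have hβs : β < s.re := hβ2.trans_le (min_le_right _ _)
  obtain ⟨K, hK, hb⟩ := theta_bound RH hβ1 (hβ2.le.trans (min_le_left _ _))
  have hl2 : 0 < Real.log 2 := Real.log_pos (by norm_num)
  have hmono : Measurable Chebyshev.theta := Chebyshev.theta_mono.measurable
  have hm1 : Measurable g1 := by unfold g1; fun_prop
  have hm2 : Measurable g2 := by unfold g2; fun_prop
  have hb1 : ∀ t > (2:ℝ), ‖g1 t‖ ≤ (K / Real.log 2) * t ^ β := by
    intro t ht
    have hlt : Real.log 2 ≤ Real.log t := Real.log_le_log (by norm_num) ht.le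
    rw [g1, Complex.norm_real, norm_div, Real.norm_eq_abs, Real.norm_eq_abs, abs_of_pos (hl2.trans_le hlt)]
    rw [div_mul_eq_mul_div]
    have := hb t (by linarith)
    gcongr
  have hb2 : ∀ t > (2:ℝ), ‖g2 t‖ ≤ (K / Real.log 2 ^ 2) * t ^ β := by
    intro t ht
    have hlt : Real.log 2 ≤ Real.log t := Real.log_le_log (by norm_num) ht.le
    rw [g2, Complex.norm_real, norm_div, norm_pow, Real.norm_eq_abs, Real.norm_eq_abs, abs_of_pos (hl2.trans_le hlt)]
    rw [div_mul_eq_mul_div]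
    have := hb t (by linarith)
    gcongr
  obtain ⟨i1, d1⟩ := L0 two_pos hm1 hb1 hβs
  obtain ⟨i2, d2⟩ := L0 two_pos hm2 hb2 hβs
  constructor
  · have hsp : (s - 1) * (Real.log 2 : ℂ) ∈ Complex.slitPlane := by
      rw [mul_comm]
      rw [Complex.mem_slitPlane_iff] at hs1 ⊢
      simp only [Complex.re_ofReal_mul, Complex.im_ofReal_mul]
      rcases hs1 with h | h
      · left; positivity
      · right; exact mul_ne_zero hl2.ne' h
    have e1 : DifferentiableAt ℂ (fun s : ℂ => expIntegralE1 ((s - 1) * (Real.log 2 : ℂ))) s :=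
      DifferentiableAt.comp (g := expIntegralE1) s (E1_hasDerivAt hsp).differentiableAt (by fun_prop)
    have e2 : DifferentiableAt ℂ (fun s : ℂ => wf s 2) s := by
      unfold wf
      refine DifferentiableAt.div_const ?_ _
      exact DifferentiableAt.const_cpow (by fun_prop) (Or.inl (by norm_num))
    unfold Afun
    exact (e1.neg.sub (e2.const_mul _)).add ((differentiableAt_id.neg.mul d1).sub d2)
  · have hIntg : IntegrableOn (fun t : ℝ => -s * (g1 t * (t:ℂ)^(-s-1)) - g2 t * (t:ℂ)^(-s-1)) (Set.Ioi 2) :=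
      (i1.const_mul _).sub i2
    have hlim := intervalIntegral_tendsto_integral_Ioi 2 hIntg tendsto_id
    have hval : ∫ t in Set.Ioi (2:ℝ), (-s * (g1 t * (t:ℂ)^(-s-1)) - g2 t * (t:ℂ)^(-s-1)) =
        -s * (∫ t in Set.Ioi (2:ℝ), g1 t * (t:ℂ)^(-s-1)) - ∫ t in Set.Ioi (2:ℝ), g2 t * (t:ℂ)^(-s-1) := by
      rw [integral_sub (i1.const_mul _) i2, integral_const_mul]
    rw [hval] at hlim
    have hsmall : Tendsto (fun x : ℝ => wf s x * ((Chebyshev.theta x - x : ℝ) : ℂ)) atTop (nhds 0) := by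
      have h7 : Tendsto (fun x : ℝ => (K / Real.log 2) * x ^ (-(s.re - β))) atTop (nhds 0) := by
        simpa using (tendsto_rpow_neg_atTop (show 0 < s.re - β by linarith)).const_mul (K / Real.log 2)
      refine squeeze_zero_norm' ?_ h7
      filter_upwards [eventually_gt_atTop 2] with x hx
      have e : wf s x * ((Chebyshev.theta x - x : ℝ) : ℂ) = (x : ℂ) ^ (-s) * g1 x := by
        rw [wf, g1]; push_cast; ring
      rw [e, norm_mul, Complex.norm_cpow_eq_rpow_re_of_pos (by linarith), neg_sub, sub_eq_add_neg,
        Real.rpow_add (by linarith)]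
      have h8 := mul_le_mul_of_nonneg_left (hb1 x hx) (show 0 ≤ x ^ (-s).re by positivity)
      refine h8.trans (le_of_eq ?_)
      rw [Complex.neg_re]; ring
    have hfin := ((tendsto_const_nhds (x := -expIntegralE1 ((s - 1) * (Real.log 2 : ℂ)) - 2 * wf s 2)).sub
      hsmall).add hlim
    rw [sub_zero] at hfin
    refine hfin.congr' ?_
    filter_upwards [eventually_ge_atTop 2] with x hx
    rw [abel hs1 hs0 hx]
    congr 1
    refine intervalIntegral.integral_congr fun t _ => ?_
    simp only [wf', g1, g2]
    push_cast; ring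

/-- terms of the correction series -/
noncomputable def bT (n : ℕ) (s : ℂ) : ℂ :=
  if n.Prime then (n : ℂ) ^ (-s) - Complex.log (1 + (n : ℂ) ^ (-s)) else 0

noncomputable def Bfun (s : ℂ) : ℂ := ∑' n, bT n s

lemma prime_norm {p : ℕ} (hp : p.Prime) (s : ℂ) : ‖(p : ℂ) ^ (-s)‖ = (p : ℝ) ^ (-s.re) := by
  rw [Complex.norm_natCast_cpow_of_pos hp.pos, Complex.neg_re]

lemma prime_norm_le {p : ℕ} (hp : p.Prime) {s : ℂ} {σ : ℝ} (hs : σ < s.re) :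
    ‖(p : ℂ) ^ (-s)‖ ≤ (p : ℝ) ^ (-σ) := by
  rw [prime_norm hp]
  exact Real.rpow_le_rpow_of_exponent_le (by exact_mod_cast hp.one_lt.le) (by linarith)

lemma prime_rpow_le {p : ℕ} (hp : p.Prime) {σ : ℝ} (hσ : 0 < σ) : (p : ℝ) ^ (-σ) ≤ (2:ℝ) ^ (-σ) :=
  Real.rpow_le_rpow_of_nonpos (by norm_num) (by exact_mod_cast hp.two_le) (by linarith)

lemma two_rpow_lt {σ : ℝ} (hσ : 0 < σ) : (2:ℝ) ^ (-σ) < 1 :=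
  Real.rpow_lt_one_of_one_lt_of_neg (by norm_num) (by linarith)

lemma prime_norm_lt {p : ℕ} (hp : p.Prime) {s : ℂ} (hs : 0 < s.re) : ‖(p : ℂ) ^ (-s)‖ < 1 := by
  rw [prime_norm hp]
  exact (prime_rpow_le hp hs).trans_lt (two_rpow_lt hs)

lemma Bfun_spec {s : ℂ} (hs : 1/2 < s.re) : DifferentiableAt ℂ Bfun s ∧ HasSum (fun n => bT n s) (Bfun s) := by
  obtain ⟨σ, h1, h2⟩ := exists_between hs
  have hσ : 0 < σ := by linarith
  set U : Set ℂ := {s | σ < s.re} with hU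
  have hUo : IsOpen U := isOpen_lt continuous_const Complex.continuous_re
  set c : ℝ := (1 - (2:ℝ) ^ (-σ))⁻¹ / 2 with hc
  have h2σ := two_rpow_lt hσ
  have hc0 : 0 ≤ c := div_nonneg (inv_nonneg.2 (by linarith)) (by norm_num)
  set u : ℕ → ℝ := fun n => (n : ℝ) ^ (-(2 * σ)) * c with hu
  have hsu : Summable u := (Real.summable_nat_rpow.2 (by linarith)).mul_right c
  have hle : ∀ n, ∀ w ∈ U, ‖bT n w‖ ≤ u n := by
    intro n w hw
    rw [bT]
    split_ifs with hp
    · have hlt := prime_norm_lt hp (s := w) (hσ.trans hw)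
      have hz := prime_norm_le hp hw
      have hz2 := hz.trans (prime_rpow_le hp hσ)
      have hb := Complex.norm_log_one_add_sub_self_le hlt
      rw [norm_sub_rev]
      refine hb.trans ?_
      have e : (n : ℝ) ^ (-(2 * σ)) = ((n : ℝ) ^ (-σ)) ^ 2 := by
        rw [← Real.rpow_natCast, ← Real.rpow_mul (Nat.cast_nonneg n)]
        congr 1; push_cast; ring
      simp only [hu, hc]
      rw [e, mul_div_assoc]
      have : (1 - ‖(n : ℂ) ^ (-w)‖)⁻¹ ≤ (1 - (2:ℝ) ^ (-σ))⁻¹ :=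
        inv_anti₀ (by linarith) (by linarith)
      have h0 : 0 ≤ (1 - ‖(n : ℂ) ^ (-w)‖)⁻¹ := inv_nonneg.2 (by linarith)
      gcongr
    · rw [norm_zero]
      exact mul_nonneg (by positivity) hc0
  have hd : ∀ n, DifferentiableOn ℂ (bT n) U := by
    intro n w hw
    refine DifferentiableAt.differentiableWithinAt ?_
    unfold bT
    split_ifs with hp
    · have hlt := prime_norm_lt hp (s := w) (hσ.trans hw)
      have hd1 : DifferentiableAt ℂ (fun s : ℂ => (n : ℂ) ^ (-s)) w :=
        DifferentiableAt.const_cpow (by fun_prop) (Or.inl (by exact_mod_cast hp.ne_zero))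
      exact hd1.sub ((hd1.const_add 1).clog (Complex.mem_slitPlane_of_norm_lt_one hlt))
    · exact differentiableAt_const _
  refine ⟨(Complex.differentiableOn_tsum_of_summable_norm hsu hd hUo hle).differentiableAt
    (hUo.mem_nhds h2), ?_⟩
  exact (Summable.of_norm_bounded hsu fun n => hle n s h2).hasSum

lemma limit_exp (RH : RiemannHypothesis) {s : ℂ} (hs : 1/2 < s.re) (hs1 : s - 1 ∈ Complex.slitPlane) :
    Tendsto (fun x : ℝ => Complex.exp (-expIntegralE1 ((s - 1) * (Real.log x : ℂ))) *
          ∏ p ∈ Nat.primesBelow (⌊x⌋₊ + 1), (1 + (p : ℂ) ^ (-s))⁻¹)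
      atTop (nhds (Complex.exp (Afun s + Bfun s))) := by
  have hA := (Afun_spec RH hs hs1).2
  have hfl : Tendsto (fun x : ℝ => ⌊x⌋₊ + 1) atTop atTop :=
    (tendsto_add_atTop_nat 1).comp tendsto_nat_floor_atTop
  have hB := (Bfun_spec hs).2.tendsto_sum_nat.comp hfl
  have h := (Complex.continuous_exp.tendsto _).comp (hA.add hB)
  refine h.congr fun x => ?_
  simp only [Function.comp]
  have e : ∏ p ∈ Nat.primesBelow (⌊x⌋₊ + 1), (1 + (p : ℂ) ^ (-s))⁻¹ =
      Complex.exp (∑ p ∈ Nat.primesBelow (⌊x⌋₊ + 1), -Complex.log (1 + (p : ℂ) ^ (-s))) := by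
    rw [Complex.exp_sum]
    refine Finset.prod_congr rfl fun p hp => ?_
    have hp' := Nat.prime_of_mem_primesBelow hp
    rw [Complex.exp_neg, Complex.exp_log]
    exact Complex.slitPlane_ne_zero (Complex.mem_slitPlane_of_norm_lt_one (prime_norm_lt hp' (by linarith)))
  have e2 : ∑ n ∈ Finset.range (⌊x⌋₊ + 1), bT n s = ∑ p ∈ Nat.primesBelow (⌊x⌋₊ + 1),
      ((p : ℂ) ^ (-s) - Complex.log (1 + (p : ℂ) ^ (-s))) := by
    rw [Nat.primesBelow, Finset.sum_filter]; rfl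
  rw [e, e2, ← Complex.exp_add, Finset.sum_sub_distrib, Finset.sum_neg_distrib]
  congr 1; ring

lemma limit_real {s : ℝ} (hs : 1 < s) :
    Tendsto (fun x : ℝ => Complex.exp (-expIntegralE1 (((s : ℂ) - 1) * (Real.log x : ℂ))) *
          ∏ p ∈ Nat.primesBelow (⌊x⌋₊ + 1), (1 + (p : ℂ) ^ (-(s : ℂ)))⁻¹)
      atTop (nhds (riemannZeta (2 * s) / riemannZeta s)) := by
  have hfl : Tendsto (fun x : ℝ => ⌊x⌋₊ + 1) atTop atTop :=
    (tendsto_add_atTop_nat 1).comp tendsto_nat_floor_atTop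
  have hz : riemannZeta s ≠ 0 := riemannZeta_ne_zero_of_one_le_re (by simpa using hs.le)
  have h1 := (riemannZeta_eulerProduct (s := 2 * s) (by simp; linarith)).div
    (riemannZeta_eulerProduct (s := s) (by simpa using hs)) hz
  have h2 := h1.comp hfl
  have hE : Tendsto (fun x : ℝ => expIntegralE1 (((s : ℂ) - 1) * (Real.log x : ℂ))) atTop (nhds 0) := by
    have := E1_tendsto.comp (Real.tendsto_log_atTop.const_mul_atTop (show 0 < s - 1 by linarith))
    refine this.congr fun x => ?_
    simp [Function.comp]
  have h3 := ((Complex.continuous_exp.tendsto _).comp hE.neg).mul h2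
  rw [neg_zero, Complex.exp_zero, one_mul] at h3
  refine h3.congr fun x => ?_
  simp only [Function.comp]
  congr 1
  rw [Pi.div_apply, ← Finset.prod_div_distrib]
  refine Finset.prod_congr rfl fun p hp => ?_
  have hp' := Nat.prime_of_mem_primesBelow hp
  have hlt := prime_norm_lt hp' (s := (s : ℂ)) (by simp; linarith)
  have e : (p : ℂ) ^ (-(2 * (s : ℂ))) = ((p : ℂ) ^ (-(s : ℂ))) ^ 2 := by
    rw [← Complex.cpow_nat_mul]; congr 1; push_cast; ring
  rw [e]
  set z := (p : ℂ) ^ (-(s : ℂ))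
  have n1 : 1 + z ≠ 0 := Complex.slitPlane_ne_zero (Complex.mem_slitPlane_of_norm_lt_one hlt)
  have n2 : 1 - z ≠ 0 := by
    rw [sub_eq_add_neg]
    exact Complex.slitPlane_ne_zero (Complex.mem_slitPlane_of_norm_lt_one (by rwa [norm_neg]))
  have : 1 - z ^ 2 = (1 + z) * (1 - z) := by ring
  rw [this]
  field_simp

/-- the domain -/
def domU : Set ℂ := {s | 1/2 < s.re} ∩ {s | s - 1 ∈ Complex.slitPlane}

lemma domU_open : IsOpen domU :=
  (isOpen_lt continuous_const Complex.continuous_re).inter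
    (Complex.isOpen_slitPlane.preimage (by fun_prop : Continuous fun s : ℂ => s - 1))

lemma two_mem : (2:ℂ) ∈ domU := by
  refine ⟨by norm_num, ?_⟩
  show (2:ℂ) - 1 ∈ Complex.slitPlane
  norm_num

lemma domU_preconn : IsPreconnected domU := by
  have h1 : StarConvex ℝ (2:ℂ) {s : ℂ | 1/2 < s.re} :=
    (convex_halfSpace_re_gt (1/2)).starConvex (by norm_num)
  have h2 : StarConvex ℝ (2:ℂ) {s : ℂ | s - 1 ∈ Complex.slitPlane} := by
    intro y hy a b ha hb hab
    have := Complex.starConvex_one_slitPlane hy ha hb hab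
    show a • (2:ℂ) + b • y - 1 ∈ Complex.slitPlane
    convert this using 1
    have hab' : (a : ℂ) + b = 1 := by exact_mod_cast hab
    simp only [Complex.real_smul]
    linear_combination hab'
  exact ((h1.inter h2).isPathConnected two_mem).isConnected.isPreconnected

lemma ratio_eq (RH : RiemannHypothesis) : Set.EqOn (fun s => Complex.exp (Afun s + Bfun s))
    (fun s => riemannZeta (2 * s) / riemannZeta s) domU := by
  refine AnalyticOnNhd.eqOn_of_preconnected_of_frequently_eq (z₀ := 2) ?_ ?_ domU_preconn two_mem ?_
  · refine DifferentiableOn.analyticOnNhd (fun s hs => ?_) domU_open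
    exact ((Afun_spec RH hs.1 hs.2).1.add (Bfun_spec hs.1).1).cexp.differentiableWithinAt
  · refine DifferentiableOn.analyticOnNhd (fun s hs => ?_) domU_open
    have hre : 1/2 < s.re := hs.1
    have hs1 : s ≠ 1 := sub_ne_zero.1 (Complex.slitPlane_ne_zero hs.2)
    have h2s : 2 * s ≠ 1 := by
      intro h
      have := congrArg Complex.re h
      simp at this
      linarith
    have hz : riemannZeta s ≠ 0 := by
      have := zZ_ne_zero RH hre
      rw [zZ_of_ne hs1] at this
      exact right_ne_zero_of_mul this
    refine DifferentiableAt.differentiableWithinAt ?_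
    refine DifferentiableAt.div ?_ (differentiableAt_riemannZeta hs1) hz
    exact DifferentiableAt.comp (g := riemannZeta) s (differentiableAt_riemannZeta h2s) (by fun_prop)
  · have ht : Tendsto (fun t : ℝ => (t : ℂ)) (nhdsWithin 2 {2}ᶜ) (nhdsWithin 2 {2}ᶜ) := by
      refine tendsto_nhdsWithin_iff.2 ⟨?_, ?_⟩
      · have := (Complex.continuous_ofReal.tendsto 2).mono_left (nhdsWithin_le_nhds (s := {2}ᶜ))
        simpa using this
      · filter_upwards [self_mem_nhdsWithin] with t ht
        intro h
        have h' : (t : ℂ) = 2 := h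
        have h3 : t = 2 := by exact_mod_cast h'
        exact ht h3
    refine ht.frequently (Eventually.frequently ?_)
    have : {t : ℝ | 1 < t} ∈ nhdsWithin (2:ℝ) {2}ᶜ :=
      nhdsWithin_le_nhds ((isOpen_lt continuous_const continuous_id).mem_nhds (by norm_num))
    filter_upwards [this] with t ht
    have ht' : 1 < t := ht
    refine tendsto_nhds_unique (limit_exp RH (s := (t : ℂ)) (by simp; linarith) ?_) (limit_real ht')
    rw [Complex.mem_slitPlane_iff]
    left; simpa using ht'

/-- Assuming RH, for `Re(s) > 1/2` with `s - 1` off the nonpositive real axis,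
`ζ(2s)/ζ(s) = lim_{x→∞} exp(−E₁((s-1)·log x)) · ∏_{p ≤ x} (1 + p^{-s})⁻¹`. -/
theorem zeta_ratio_continuation (RH : RiemannHypothesis) (s : ℂ)
    (hs : 1 / 2 < s.re) (hs' : ¬∃ r : ℝ, r ≤ 0 ∧ s - 1 = (r : ℂ)) :
    Tendsto
      (fun x : ℝ =>
        Complex.exp (-expIntegralE1 ((s - 1) * (Real.log x : ℂ))) *
          ∏ p ∈ Nat.primesBelow (⌊x⌋₊ + 1), (1 + (p : ℂ) ^ (-s))⁻¹)
      atTop (nhds (riemannZeta (2 * s) / riemannZeta s)) := by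
  have hs1 : s - 1 ∈ Complex.slitPlane := by
    rw [Complex.mem_slitPlane_iff]
    by_contra hn
    push Not at hn
    exact hs' ⟨(s - 1).re, hn.1, Complex.ext (by simp) (by rw [hn.2]; simp)⟩
  have h := ratio_eq RH (show s ∈ domU from ⟨hs, hs1⟩)
  have h2 := limit_exp RH hs hs1
  simp only at h
  rwa [h] at h2
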